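/- Let s > 3/2. There is a constant C = C(s) > 0 such that for all ε ∈ (0,1) and all u ∈ H^s(𝕋): |(J_ε(J_ε u · ∂_x J_ε u), u)_{H^s}| ≤ C ‖∂_x u‖_{L^∞} ‖u‖²_{H^s}. -/

import Mathlib

noncomputable section
open scoped BigOperators

/-- A (complex-valued) function on the torus `𝕋 = ℝ/2πℤ`, represented by its sequence of
Fourier coefficients `f̂ : ℤ → ℂ`. -/
abbrev FC := ℤ → ℂ

namespace FC

/-- The Sobolev weight `(1+k²)^s`. -/
def wt (s : ℝ) (k : ℤ) : ℝ := (1 + (k : ℝ) ^ 2) ^ s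

/-- `c` represents a function belonging to the Sobolev space `H^s(𝕋)`. -/
def memHs (s : ℝ) (c : FC) : Prop := Summable fun k : ℤ => wt s k * ‖c k‖ ^ 2

/-- The `H^s(𝕋)` norm: `‖f‖²_{H^s} = Σ_{k∈ℤ} (1+k²)^s |f̂(k)|²`. -/
def hsNorm (s : ℝ) (c : FC) : ℝ := Real.sqrt (∑' k : ℤ, wt s k * ‖c k‖ ^ 2)

/-- The `H^s(𝕋)` inner product `(f,g)_{H^s} = Σ_{k∈ℤ} (1+k²)^s f̂(k) conj(ĝ(k))`
(its real part; the sum is real for real-valued functions). -/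
def hsInner (s : ℝ) (c d : FC) : ℝ :=
  (∑' k : ℤ, ((wt s k : ℂ) * (c k * (starRingEnd ℂ) (d k)))).re

/-- `c` represents a real-valued function (conjugate-symmetric coefficients). -/
def isReal (c : FC) : Prop := ∀ k : ℤ, c (-k) = (starRingEnd ℂ) (c k)

/-- The derivative `∂ₓ`, i.e. the Fourier multiplier `ik`. -/
def D1 (c : FC) : FC := fun k => Complex.I * (k : ℂ) * c k

/-- The pointwise product of functions, i.e. convolution of Fourier coefficients. -/
def mul (c d : FC) : FC := fun k => ∑' j : ℤ, c j * d (k - j)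

/-- The represented function, evaluated at `x ∈ ℝ`. -/
def eval (c : FC) (x : ℝ) : ℂ := ∑' k : ℤ, c k * Complex.exp (Complex.I * (k : ℂ) * (x : ℂ))

/-- The `L^∞` norm (supremum of the represented periodic function over ℝ). -/
def linfty (c : FC) : ℝ := ⨆ x : ℝ, ‖eval c x‖

/-- The `W^{1,∞}` norm. -/
def w1infty (c : FC) : ℝ := linfty c + linfty (D1 c)

/-- A Fourier multiplier operator with real symbol `m`. -/
def mult (m : ℤ → ℝ) (c : FC) : FC := fun k => (m k : ℂ) * c k

/-- The operator `(1-∂ₓ²)⁻¹`, i.e. the Fourier multiplier `(1+k²)⁻¹`. -/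
def helmInv : FC → FC := mult fun k => (1 + (k : ℝ) ^ 2)⁻¹

/-- The operator `1-∂ₓ²`, i.e. the Fourier multiplier `1+k²`. -/
def helm : FC → FC := mult fun k => 1 + (k : ℝ) ^ 2

/-- The operator `T̃_ε = (1-ε²∂ₓ²)⁻¹`, i.e. the Fourier multiplier `(1+ε²k²)⁻¹`. -/
def T (ε : ℝ) : FC → FC := mult fun k => (1 + ε ^ 2 * (k : ℝ) ^ 2)⁻¹

/-- The periodic Hilbert transform, i.e. the Fourier multiplier `-i·sgn(k)`. -/
def hilbert (c : FC) : FC := fun k => -Complex.I * (Int.sign k : ℂ) * c k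

/-- The Friedrichs-type mollifier `J_ε`, the Fourier multiplier `ĵ(εk)`. -/
def Jmol (jhat : ℝ → ℝ) (ε : ℝ) : FC → FC := mult fun k => jhat (ε * (k : ℝ))

/-- The generalized Lie derivative `𝓛_ξ f = ξ ∂ₓ f + (∂ₓ ξ) f`. -/
def lie (ξ c : FC) : FC := mul ξ (D1 c) + mul (D1 ξ) c

/-- `𝓛²_ξ f = 𝓛_ξ (𝓛_ξ f)`. -/
def lie2 (ξ c : FC) : FC := lie ξ (lie ξ c)

/-- The coefficientwise sum `Σ_{k∈ℕ} F k` of a sequence of functions. -/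
def tsumFC (F : ℕ → FC) : FC := fun m => ∑' k : ℕ, F k m

/-- The norm on the product space `H^{s₁}×H^{s₂}`. -/
def pairNorm (s₁ s₂ : ℝ) (c d : FC) : ℝ := Real.sqrt (hsNorm s₁ c ^ 2 + hsNorm s₂ d ^ 2)

/-- The inner product on the product space `H^{s₁}×H^{s₂}`:
`((c₁,d₁),(c₂,d₂)) ↦ (c₁,c₂)_{H^{s₁}} + (d₁,d₂)_{H^{s₂}}`. -/
def pairInner (s₁ s₂ : ℝ) (c₁ d₁ c₂ d₂ : FC) : ℝ := hsInner s₁ c₁ c₂ + hsInner s₂ d₁ d₂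

end FC

/-
The weight `(1 + k²)^s` is, up to a constant, the integral over all scales `h ∈ ℂ` of
`|h|^{-2-2s} |e^{i Re((k + i) h)} - 1|^{4M}`, because that integral is homogeneous in `k + i`. This
reduces the estimate to differences of order `2M` at a fixed scale. Distributing them over the
transport term `v ∂ₓv` by the discrete Leibniz rule, every difference which falls on the coefficient
`v` costs only `‖∂ₓv‖_{L^∞}`, and when none does the derivative is removed by integrating by parts.
Only the values of `∂ₓv` enter, never its Sobolev norm. The integration by parts would be exact for
real `v`; for an asymmetric `ĵ` the function `v = J_ε u` is real only up to `O(ε ‖∂ₓu‖_{L^∞})`, and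
the loss of a derivative on this error is absorbed by `ε ‖∂ₓ J_ε u‖_{H^s} ≲ ‖u‖_{H^s}`.
-/

namespace FC

open MeasureTheory Real
open scoped ComplexConjugate

section Torus

open AddCircle
open scoped InnerProductSpace

local instance fact_two_pi_pos : Fact (0 < 2 * π) := ⟨two_pi_pos⟩

variable {F G H : FC}

/-- The continuous function on `AddCircle (2 * π)` whose Fourier series has coefficients `c`;
it is `0` by convention unless `c` is summable. -/
def toCircle (c : FC) : C(AddCircle (2 * π), ℂ) := ∑' k : ℤ, c k • fourier k

/-- The class in `L²` (for the normalised Haar measure) of a continuous function on the torus. -/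
def toL2 : C(AddCircle (2 * π), ℂ) →L[ℂ] Lp ℂ 2 (@haarAddCircle (2 * π) _) :=
  ContinuousMap.toLp 2 haarAddCircle ℂ

lemma coeFn_toL2 (f : C(AddCircle (2 * π), ℂ)) : toL2 f =ᵐ[haarAddCircle] f :=
  ContinuousMap.coeFn_toLp _ _

lemma hasSum_inner_toL2 {ι : Type*} {f : ι → C(AddCircle (2 * π), ℂ)}
    {g : C(AddCircle (2 * π), ℂ)} (hfg : HasSum f g) (x : Lp ℂ 2 (@haarAddCircle (2 * π) _)) :
    HasSum (fun i => ⟪x, toL2 (f i)⟫_ℂ) ⟪x, toL2 g⟫_ℂ :=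
  (innerSL ℂ x ∘L toL2).hasSum hfg

lemma summable_norm_smul_fourier (hF : Summable F) :
    Summable fun k => ‖F k • (fourier k : C(AddCircle (2 * π), ℂ))‖ := by
  simpa only [norm_smul, fourier_norm, mul_one] using hF.norm

lemma hasSum_toCircle (hF : Summable F) : HasSum (fun k => F k • fourier k) (toCircle F) :=
  (summable_norm_smul_fourier hF).of_norm.hasSum

lemma toCircle_coe (hF : Summable F) (x : ℝ) : toCircle F (x : AddCircle (2 * π)) = eval F x := by
  refine ((ContinuousMap.hasSum_apply (hasSum_toCircle hF) _).tsum_eq.symm.trans ?_)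
  refine tsum_congr fun k => ?_
  rw [ContinuousMap.smul_apply, fourier_coe_apply, smul_eq_mul]
  congr 2
  push_cast
  field_simp

lemma inner_fourier_toCircle (hF : Summable F) (n : ℤ) :
    ⟪toL2 (fourier n), toL2 (toCircle F)⟫_ℂ = F n := by
  have horth (k : ℤ) : ⟪toL2 (fourier n), toL2 (fourier k)⟫_ℂ = if n = k then 1 else 0 :=
    orthonormal_iff_ite.mp orthonormal_fourier n k
  refine (hasSum_inner_toL2 (hasSum_toCircle hF) _).unique ?_
  convert hasSum_ite_eq n (F n) using 2 with k
  rw [map_smul, inner_smul_right, horth, mul_ite, mul_one, mul_zero]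
  grind

lemma inner_toCircle_fourier (hF : Summable F) (n : ℤ) :
    ⟪toL2 (toCircle F), toL2 (fourier n)⟫_ℂ = conj (F n) := by
  rw [← inner_conj_symm, inner_fourier_toCircle hF]

lemma norm_toL2_toCircle_sq (hF : Summable F) : ‖toL2 (toCircle F)‖ ^ 2 = ∑' k, ‖F k‖ ^ 2 := by
  have h := hasSum_inner_toL2 (hasSum_toCircle hF) (toL2 (toCircle F))
  simp only [map_smul, inner_smul_right, inner_toCircle_fourier hF, Complex.mul_conj',
    inner_self_eq_norm_sq_to_K, RCLike.ofReal_eq_complex_ofReal, ← Complex.ofReal_pow] at h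
  exact (Complex.hasSum_ofReal.mp h).tsum_eq.symm

/-- The mean over the torus of `f g h̄`, written in terms of the Fourier coefficients of
`f`, `g` and `h`. -/
def trilin (F G H : FC) : ℂ := ∑' p : ℤ × ℤ, F p.1 * G p.2 * conj (H (p.1 + p.2))

lemma smul_fourier_mul_smul_fourier (a b : ℂ) (m n : ℤ) :
    a • fourier m * b • fourier n = (a * b) • (fourier (m + n) : C(AddCircle (2 * π), ℂ)) := by
  ext x
  simp only [ContinuousMap.mul_apply, ContinuousMap.smul_apply, smul_eq_mul, fourier_add]
  ring

lemma hasSum_toCircle_mul (hF : Summable F) (hG : Summable G) :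
    HasSum (fun p : ℤ × ℤ => (F p.1 * G p.2) • fourier (p.1 + p.2))
      (toCircle F * toCircle G) := by
  have hs := summable_mul_of_summable_norm (summable_norm_smul_fourier hF)
    (summable_norm_smul_fourier hG)
  have h := HasSum.mul (f := fun k => F k • (fourier k : C(AddCircle (2 * π), ℂ)))
    (g := fun k => G k • fourier k) (hasSum_toCircle hF) (hasSum_toCircle hG) hs
  simpa only [smul_fourier_mul_smul_fourier] using h

lemma inner_toCircle_mul (hF : Summable F) (hG : Summable G) (hH : Summable H) :
    ⟪toL2 (toCircle H), toL2 (toCircle F * toCircle G)⟫_ℂ = trilin F G H := by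
  refine (hasSum_inner_toL2 (hasSum_toCircle_mul hF hG) _).tsum_eq.symm.trans ?_
  simp only [map_smul, inner_smul_right, inner_toCircle_fourier hH, trilin]

lemma norm_trilin_le_mul {A : ℝ} (hF : Summable F) (hG : Summable G) (hH : Summable H)
    (hA : ∀ x, ‖eval F x‖ ≤ A) :
    ‖trilin F G H‖ ≤ A * (‖toL2 (toCircle G)‖ * ‖toL2 (toCircle H)‖) := by
  have hmul : ‖toL2 (toCircle F * toCircle G)‖ ≤ A * ‖toL2 (toCircle G)‖ := by
    refine Lp.norm_le_mul_norm_of_ae_le_mul ?_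
    filter_upwards [coeFn_toL2 (toCircle F * toCircle G), coeFn_toL2 (toCircle G)] with y hFG hG
    rw [hFG, hG, ContinuousMap.mul_apply, norm_mul]
    induction y using QuotientAddGroup.induction_on with
    | H x => exact mul_le_mul_of_nonneg_right (toCircle_coe hF x ▸ hA x) (norm_nonneg _)
  rw [← inner_toCircle_mul hF hG hH]
  calc _ ≤ ‖toL2 (toCircle H)‖ * ‖toL2 (toCircle F * toCircle G)‖ := norm_inner_le_norm _ _
    _ ≤ ‖toL2 (toCircle H)‖ * (A * ‖toL2 (toCircle G)‖) := by gcongr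
    _ = _ := by ring

lemma norm_trilin_le {S t : ℝ} (hS : 0 ≤ S) (hF : Summable F) (hG : Summable G) (hH : Summable H)
    (hFS : ∀ x, ‖eval F x‖ ≤ S * t) :
    ‖trilin F G H‖ ≤ S / 2 * (t ^ 2 * ∑' k, ‖G k‖ ^ 2 + ∑' k, ‖H k‖ ^ 2) := by
  refine (norm_trilin_le_mul hF hG hH hFS).trans ?_
  rw [← norm_toL2_toCircle_sq hG, ← norm_toL2_toCircle_sq hH]
  nlinarith [mul_nonneg hS (sq_nonneg (t * ‖toL2 (toCircle G)‖ - ‖toL2 (toCircle H)‖))]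

end Torus

section Evaluation

variable {c d : FC} {S : ℝ}

lemma norm_mul_exp_I_mul (c : FC) (k : ℤ) (x : ℝ) :
    ‖c k * Complex.exp (Complex.I * k * x)‖ = ‖c k‖ := by
  have hphase : Complex.I * k * x = Complex.I * ((k * x : ℝ) : ℂ) := by push_cast; ring
  rw [norm_mul, hphase, Complex.norm_exp_I_mul_ofReal, mul_one]

lemma hasSum_eval (hc : Summable c) (x : ℝ) :
    HasSum (fun k : ℤ => c k * Complex.exp (Complex.I * k * x)) (eval c x) := by
  refine (Summable.of_norm ?_).hasSum
  simpa only [norm_mul_exp_I_mul] using hc.norm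

lemma norm_eval_le (hc : Summable c) (x : ℝ) : ‖eval c x‖ ≤ ∑' k, ‖c k‖ := by
  simpa only [eval, norm_mul_exp_I_mul] using
    norm_tsum_le_tsum_norm (hasSum_eval hc x).summable.norm

lemma eval_sub (hc : Summable c) (hd : Summable d) (x : ℝ) :
    eval (c - d) x = eval c x - eval d x := by
  rw [eval, ← ((hasSum_eval hc x).sub (hasSum_eval hd x)).tsum_eq]
  exact tsum_congr fun k => sub_mul _ _ _

lemma eval_const_mul (a : ℂ) (c : FC) (x : ℝ) : eval (fun k => a * c k) x = a * eval c x := by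
  simp only [eval, mul_assoc, tsum_mul_left]

lemma norm_eval_le_linfty (hc : Summable c) (x : ℝ) : ‖eval c x‖ ≤ linfty c :=
  le_ciSup (f := fun x => ‖eval c x‖)
    ⟨∑' k, ‖c k‖, Set.forall_mem_range.mpr (norm_eval_le hc)⟩ x

lemma norm_D1 (c : FC) (k : ℤ) : ‖D1 c k‖ = |(k : ℝ)| * ‖c k‖ := by
  rw [D1, norm_mul, norm_mul, Complex.norm_I, one_mul, Complex.norm_intCast]

lemma summable_of_summable_D1 (hDc : Summable (D1 c)) : Summable c := by
  refine .of_norm_bounded_eventually hDc.norm ?_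
  filter_upwards [(Set.finite_singleton (0 : ℤ)).compl_mem_cofinite] with k hk
  rw [norm_D1]
  exact le_mul_of_one_le_left (norm_nonneg _) (by exact_mod_cast Int.one_le_abs hk)

lemma hasDerivAt_eval (hDc : Summable (D1 c)) (x : ℝ) :
    HasDerivAt (eval c) (eval (D1 c) x) x := by
  refine hasDerivAt_tsum (u := fun k => ‖D1 c k‖) hDc.norm (fun k y => ?_)
    (fun k y => (norm_mul_exp_I_mul _ k y).le)
    (hasSum_eval (summable_of_summable_D1 hDc) 0).summable x
  have hlin : HasDerivAt (fun y : ℝ => Complex.I * k * (y : ℂ)) (Complex.I * k) y := by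
    simpa using (Complex.ofRealCLM.hasDerivAt (x := y)).const_mul (Complex.I * k)
  refine (hlin.cexp.const_mul (c k)).congr_deriv ?_
  simp only [D1]
  ring

lemma norm_eval_sub_eval_le (hDc : Summable (D1 c))
    (hS : ∀ x, ‖eval (D1 c) x‖ ≤ S) (x y : ℝ) : ‖eval c y - eval c x‖ ≤ S * |y - x| :=
  convex_univ.norm_image_sub_le_of_norm_hasDerivWithin_le
    (fun z _ => (hasDerivAt_eval hDc z).hasDerivWithinAt) (fun z _ => hS z)
    (Set.mem_univ x) (Set.mem_univ y)

end Evaluation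

section DifferenceSymbols

variable {c : FC} {S : ℝ}

/-- The symbol `e^{i Re z} - 1`: for `z = k h` with `h` real, it is the effect on the frequency `k`
of the difference operator `f ↦ f(· + h) - f`. -/
def diffSymbol (z : ℂ) : ℂ := Complex.exp (z.re * Complex.I) - 1

lemma norm_exp_re_mul_I (z : ℂ) : ‖Complex.exp (z.re * Complex.I)‖ = 1 :=
  Complex.norm_exp_ofReal_mul_I _

lemma norm_diffSymbol_le_two (z : ℂ) : ‖diffSymbol z‖ ≤ 2 :=
  (norm_sub_le _ _).trans (by rw [norm_exp_re_mul_I, norm_one]; norm_num)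

lemma norm_diffSymbol_le (z : ℂ) : ‖diffSymbol z‖ ≤ ‖z‖ := by
  rw [diffSymbol, mul_comm]
  exact (Real.norm_exp_I_mul_ofReal_sub_one_le (x := z.re)).trans (Complex.abs_re_le_norm z)

@[fun_prop]
lemma continuous_diffSymbol : Continuous diffSymbol := by
  unfold diffSymbol
  fun_prop

/-- The symbol of the difference operator with step `Re h`. -/
def diff (h : ℂ) : FC := fun k => diffSymbol (k * h)

/-- The symbol `e^{i Re((k + i) h)}`: translation by `Re h`, times the phase `e^{-i Im h}`.
Complexifying the frequency from `k` to `k + i` produces the inhomogeneous weight, as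
`|k + i|² = 1 + k²`. -/
def twist (h : ℂ) : FC := fun k => Complex.exp (((k + Complex.I) * h).re * Complex.I)

/-- The difference symbol at the complex frequency `k + i`. -/
def twistedDiff (h : ℂ) : FC := fun k => diffSymbol ((k + Complex.I) * h)

lemma norm_twist (h : ℂ) (k : ℤ) : ‖twist h k‖ = 1 := norm_exp_re_mul_I _

lemma twistedDiff_eq_twist_sub_one (h : ℂ) : twistedDiff h = twist h - 1 := rfl

lemma twistedDiff_add (h : ℂ) (a b : ℤ) :
    twistedDiff h (a + b) = twist h b * diff h a + twistedDiff h b := by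
  have hphase : ((((a + b : ℤ) + Complex.I) * h).re : ℂ) * Complex.I =
      ((a : ℂ) * h).re * Complex.I + (((b : ℂ) + Complex.I) * h).re * Complex.I := by
    rw [← add_mul, ← Complex.ofReal_add, ← Complex.add_re]
    push_cast
    ring_nf
  rw [twistedDiff, diffSymbol, hphase, Complex.exp_add, twistedDiff, twist, diff, diffSymbol,
    diffSymbol]
  ring

lemma eval_twist_mul (h : ℂ) (c : FC) (x : ℝ) :
    eval (twist h * c) x = Complex.exp (-h.im * Complex.I) * eval c (x + h.re) := by
  rw [← eval_const_mul]
  refine tsum_congr fun k => ?_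
  have hphase : twist h k = Complex.exp (-h.im * Complex.I + Complex.I * k * h.re) := by
    rw [twist]
    congr 1
    simp
    ring
  simp only [Pi.mul_apply, hphase, Complex.ofReal_add, mul_add, Complex.exp_add]
  ring

lemma eval_diff_mul (hc : Summable c) (h : ℂ) (x : ℝ) :
    eval (diff h * c) x = eval c (x + h.re) - eval c x := by
  rw [eval, ← ((hasSum_eval hc _).sub (hasSum_eval hc _)).tsum_eq]
  refine tsum_congr fun k => ?_
  have hphase : Complex.I * k * h.re = ((k : ℂ) * h).re * Complex.I := by
    simp
    ring
  simp only [Pi.mul_apply, diff, diffSymbol, Complex.ofReal_add, mul_add, Complex.exp_add, hphase]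
  ring

lemma summable_mul_of_norm_le {m : FC} {A : ℝ} (hm : ∀ k, ‖m k‖ ≤ A) (hc : Summable c) :
    Summable (m * c) :=
  .of_norm_bounded (hc.norm.mul_left A) fun k => by
    rw [Pi.mul_apply, norm_mul]
    gcongr
    exact hm k

lemma summable_twist_pow_mul (hc : Summable c) (h : ℂ) (n : ℕ) : Summable (twist h ^ n * c) :=
  summable_mul_of_norm_le (A := 1)
    (fun k => by rw [Pi.pow_apply, norm_pow, norm_twist, one_pow]) hc

lemma summable_diff_pow_mul (hc : Summable c) (h : ℂ) (n : ℕ) : Summable (diff h ^ n * c) :=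
  summable_mul_of_norm_le (A := 2 ^ n)
    (fun k => by rw [Pi.pow_apply, norm_pow]; gcongr; exact norm_diffSymbol_le_two _) hc

lemma summable_twistedDiff_pow_mul (hc : Summable c) (h : ℂ) (n : ℕ) :
    Summable (twistedDiff h ^ n * c) :=
  summable_mul_of_norm_le (A := 2 ^ n)
    (fun k => by rw [Pi.pow_apply, norm_pow]; gcongr; exact norm_diffSymbol_le_two _) hc

lemma norm_eval_twist_mul_le (hS : ∀ x, ‖eval c x‖ ≤ S) (h : ℂ) (x : ℝ) :
    ‖eval (twist h * c) x‖ ≤ S := by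
  rw [eval_twist_mul, norm_mul, ← Complex.ofReal_neg, Complex.norm_exp_ofReal_mul_I, one_mul]
  exact hS _

lemma norm_eval_twist_pow_mul_le (hS : ∀ x, ‖eval c x‖ ≤ S) (h : ℂ) (n : ℕ) (x : ℝ) :
    ‖eval (twist h ^ n * c) x‖ ≤ S := by
  induction n generalizing x with
  | zero => simpa only [pow_zero, one_mul] using hS x
  | succ n ih =>
    rw [pow_succ', mul_assoc]
    exact norm_eval_twist_mul_le ih h x

lemma norm_eval_diff_pow_mul_le (hc : Summable c) (hS : ∀ x, ‖eval c x‖ ≤ S) (h : ℂ) (n : ℕ)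
    (x : ℝ) : ‖eval (diff h ^ n * c) x‖ ≤ 2 ^ n * S := by
  induction n generalizing x with
  | zero => simpa only [pow_zero, one_mul] using hS x
  | succ n ih =>
    rw [pow_succ', pow_succ' (2 : ℝ), mul_assoc, mul_assoc, two_mul,
      eval_diff_mul (summable_diff_pow_mul hc h n)]
    exact (norm_sub_le _ _).trans (add_le_add (ih _) (ih _))

lemma norm_eval_twistedDiff_pow_mul_le (hc : Summable c) (hS : ∀ x, ‖eval c x‖ ≤ S) (h : ℂ) (n : ℕ)
    (x : ℝ) : ‖eval (twistedDiff h ^ n * c) x‖ ≤ 2 ^ n * S := by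
  induction n generalizing x with
  | zero => simpa only [pow_zero, one_mul] using hS x
  | succ n ih =>
    have hsum := summable_twistedDiff_pow_mul hc h n
    rw [pow_succ', pow_succ' (2 : ℝ), mul_assoc, mul_assoc, two_mul,
      twistedDiff_eq_twist_sub_one, sub_mul, one_mul, ← twistedDiff_eq_twist_sub_one,
      eval_sub (by simpa only [pow_one] using summable_twist_pow_mul hsum h 1) hsum]
    exact (norm_sub_le _ _).trans (add_le_add (norm_eval_twist_mul_le ih h x) (ih x))

lemma norm_eval_diff_pow_succ_mul_le (hDc : Summable (D1 c))
    (hS : ∀ x, ‖eval (D1 c) x‖ ≤ S) (h : ℂ) (n : ℕ) (x : ℝ) :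
    ‖eval (diff h ^ (n + 1) * c) x‖ ≤ 2 ^ n * (S * ‖h‖) := by
  have hS0 : 0 ≤ S := (norm_nonneg _).trans (hS 0)
  have hc := summable_of_summable_D1 hDc
  rw [pow_succ, mul_assoc]
  refine norm_eval_diff_pow_mul_le (by simpa using summable_diff_pow_mul hc h 1) (fun y => ?_) h n x
  rw [eval_diff_mul hc]
  refine (norm_eval_sub_eval_le hDc hS _ _).trans ?_
  rw [add_sub_cancel_left]
  gcongr
  exact Complex.abs_re_le_norm h

end DifferenceSymbols

section Transport

variable {F F' G H v w : FC} {S δ : ℝ}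

lemma summable_trilin (hF : Summable F) (hG : Summable G) (hH : Summable H) :
    Summable fun p : ℤ × ℤ => F p.1 * G p.2 * conj (H (p.1 + p.2)) := by
  have hFG := (summable_mul_of_summable_norm hF.norm hG.norm).norm
  refine .of_norm_bounded (hFG.mul_right (∑' k, ‖H k‖)) fun p => ?_
  rw [norm_mul, RCLike.norm_conj]
  gcongr
  exact hH.norm.le_tsum _ fun _ _ => norm_nonneg _

lemma trilin_comm (F G H : FC) : trilin F G H = trilin G F H := by
  rw [trilin, ← (Equiv.prodComm ℤ ℤ).tsum_eq]
  refine tsum_congr fun p => ?_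
  simp only [Equiv.prodComm_apply, Prod.fst_swap, Prod.snd_swap, add_comm p.2, mul_comm (F p.2)]

lemma trilin_sub_left (hF : Summable F) (hF' : Summable F') (hG : Summable G) (hH : Summable H) :
    trilin (F - F') G H = trilin F G H - trilin F' G H := by
  rw [trilin, trilin, trilin, ← (summable_trilin hF hG hH).tsum_sub (summable_trilin hF' hG hH)]
  simp only [Pi.sub_apply, sub_mul]

/-- The Fourier coefficients of the complex conjugate function. -/
def conjFun (c : FC) : FC := fun k => conj (c (-k))

lemma summable_conjFun (hF : Summable F) : Summable (conjFun F) :=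
  .of_norm <| by
    simpa only [conjFun, RCLike.norm_conj, Function.comp_def, Equiv.neg_apply] using
      (Equiv.neg ℤ).summable_iff.mpr hF.norm

lemma eval_conjFun (c : FC) (x : ℝ) : eval (conjFun c) x = conj (eval c x) := by
  rw [eval, eval, Complex.conj_tsum, ← (Equiv.neg ℤ).tsum_eq]
  refine tsum_congr fun k => ?_
  simp only [conjFun, Equiv.neg_apply, neg_neg, map_mul, ← Complex.exp_conj, Complex.conj_I,
    Complex.conj_ofReal, map_intCast, Int.cast_neg]
  ring_nf

lemma D1_conjFun (c : FC) : D1 (conjFun c) = conjFun (D1 c) := by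
  ext k
  simp only [D1, conjFun, map_mul, Complex.conj_I, Int.cast_neg, map_neg, map_intCast]
  ring

lemma conj_trilin (F G H : FC) : conj (trilin F G H) = trilin (conjFun F) H G := by
  let shear : ℤ × ℤ ≃ ℤ × ℤ :=
    { toFun := fun p => (-p.1, p.1 + p.2)
      invFun := fun p => (-p.1, p.1 + p.2)
      left_inv := fun p => by simp
      right_inv := fun p => by simp }
  rw [trilin, Complex.conj_tsum, ← shear.tsum_eq]
  refine tsum_congr fun p => ?_
  simp only [shear, Equiv.coe_fn_mk, conjFun, map_mul, Complex.conj_conj, neg_add_cancel_left]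
  ring

lemma trilin_D1_right (hDF : Summable (D1 F)) (hDG : Summable (D1 G))
    (hH : Summable H) :
    trilin F G (D1 H) = -trilin (D1 F) G H - trilin F (D1 G) H := by
  have hF := summable_of_summable_D1 hDF
  have hG := summable_of_summable_D1 hDG
  rw [trilin, trilin, trilin, neg_sub_left, ← (summable_trilin hF hDG hH).tsum_add
    (summable_trilin hDF hG hH), ← tsum_neg]
  refine tsum_congr fun p => ?_
  simp only [D1, map_mul, Complex.conj_I, Int.cast_add, map_add, map_intCast]
  ring

lemma two_mul_re_trilin_D1_self (hDv : Summable (D1 v)) (hDw : Summable (D1 w)) :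
    (2 * (trilin v (D1 w) w).re : ℂ) =
      trilin (v - conjFun v) (D1 w) w - trilin (D1 (conjFun v)) w w := by
  have hv := summable_of_summable_D1 hDv
  have hw := summable_of_summable_D1 hDw
  have hv' := summable_conjFun hv
  have hDv' : Summable (D1 (conjFun v)) := D1_conjFun v ▸ summable_conjFun hDv
  calc _ = trilin v (D1 w) w + trilin (conjFun v) w (D1 w) := by
        rw [← conj_trilin, Complex.add_conj]
        push_cast
        rfl
    _ = _ := by
        rw [trilin_D1_right hDv' hDw hw, trilin_sub_left hv hv' hDw hw]
        ring

lemma abs_re_trilin_D1_self_le (hDv : Summable (D1 v)) (hDw : Summable (D1 w))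
    (hS : ∀ x, ‖eval (D1 v) x‖ ≤ S) (hδ : ∀ x, |(eval v x).im| ≤ S * δ) :
    |(trilin v (D1 w) w).re| ≤ S * (δ ^ 2 * ∑' k, ‖D1 w k‖ ^ 2 + ∑' k, ‖w k‖ ^ 2) := by
  have hv := summable_of_summable_D1 hDv
  have hw := summable_of_summable_D1 hDw
  have hS0 : 0 ≤ S := (norm_nonneg _).trans (hS 0)
  have hDv' : Summable (D1 (conjFun v)) := D1_conjFun v ▸ summable_conjFun hDv
  have him (x : ℝ) : ‖eval (v - conjFun v) x‖ ≤ S * (2 * δ) := by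
    rw [eval_sub hv (summable_conjFun hv), eval_conjFun, Complex.sub_conj, norm_mul,
      Complex.norm_I, mul_one, Complex.norm_real, Real.norm_eq_abs, abs_mul, abs_two]
    linarith [hδ x]
  have hD (x : ℝ) : ‖eval (D1 (conjFun v)) x‖ ≤ S * 1 := by
    rw [D1_conjFun, eval_conjFun, RCLike.norm_conj, mul_one]
    exact hS x
  have hsub : Summable (v - conjFun v) := hv.sub (summable_conjFun hv)
  have hmain := norm_trilin_le hS0 hsub hDw hw him
  have hcomm := norm_trilin_le hS0 hDv' hw hw hD
  have hnorm : 2 * |(trilin v (D1 w) w).re| ≤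
      ‖trilin (v - conjFun v) (D1 w) w‖ + ‖trilin (D1 (conjFun v)) w w‖ := by
    have h := two_mul_re_trilin_D1_self hDv hDw ▸ norm_sub_le
      (trilin (v - conjFun v) (D1 w) w) (trilin (D1 (conjFun v)) w w)
    rwa [norm_mul, Complex.norm_two, Complex.norm_real] at h
  have hw0 : 0 ≤ S * ∑' k, ‖w k‖ ^ 2 := mul_nonneg hS0 (tsum_nonneg fun k => sq_nonneg _)
  linarith

end Transport

section Localized

variable {v w g : FC} {S δ : ℝ} {M : ℕ}

/-- A majorant, at the scale `z`, of every power of the difference symbol that the Leibniz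
expansion of `|diffSymbol| ^ (4 * M)` produces. -/
def diffMajorant (M : ℕ) (z : ℂ) : ℝ := (1 + ‖z‖ ^ 2) * ‖diffSymbol z‖ ^ (2 * M)

lemma diffMajorant_nonneg (M : ℕ) (z : ℂ) : 0 ≤ diffMajorant M z := by
  unfold diffMajorant
  positivity

lemma one_add_sq_mul_norm_diffSymbol_pow_le {j : ℕ} (hMj : M ≤ j) (hj : j ≤ 2 * M) (z : ℂ) :
    (1 + ‖z‖ ^ 2) * ‖diffSymbol z‖ ^ (2 * j) ≤ 4 ^ M * diffMajorant M z := by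
  have hpow : ‖diffSymbol z‖ ^ (2 * (j - M)) ≤ 4 ^ M :=
    calc _ ≤ (2 : ℝ) ^ (2 * (j - M)) := by gcongr; exact norm_diffSymbol_le_two z
      _ = 4 ^ (j - M) := by rw [pow_mul]; norm_num
      _ ≤ 4 ^ M := pow_le_pow_right₀ (by norm_num) (by omega)
  calc _ = ‖diffSymbol z‖ ^ (2 * (j - M)) * diffMajorant M z := by
        rw [diffMajorant, show 2 * j = 2 * (j - M) + 2 * M by omega, pow_add]
        ring
    _ ≤ _ := by gcongr; exact diffMajorant_nonneg M z

/-- The energy of `v`, localised at the scale `1 / |h|` in frequency; `δ` bounds the defect from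
being real of the velocity by which `v` is transported. -/
def diffEnergy (M : ℕ) (δ : ℝ) (v : FC) (h : ℂ) (k : ℤ) : ℝ :=
  (diffMajorant M (k * h) + diffMajorant M ((k + Complex.I) * h)) *
    (‖v k‖ ^ 2 + δ ^ 2 * ‖D1 v k‖ ^ 2)

lemma diffEnergy_nonneg (M : ℕ) (δ : ℝ) (v : FC) (h : ℂ) (k : ℤ) : 0 ≤ diffEnergy M δ v h k :=
  mul_nonneg (add_nonneg (diffMajorant_nonneg _ _) (diffMajorant_nonneg _ _)) (by positivity)

lemma tsum_diffEnergy_nonneg (M : ℕ) (δ : ℝ) (v : FC) (h : ℂ) : 0 ≤ ∑' k, diffEnergy M δ v h k :=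
  tsum_nonneg (diffEnergy_nonneg M δ v h)

lemma summable_norm_sq {c : FC} (hc : Summable c) : Summable fun k => ‖c k‖ ^ 2 := by
  refine .of_nonneg_of_le (fun k => sq_nonneg _) (fun k => ?_) (hc.norm.mul_left (∑' k, ‖c k‖))
  rw [sq]
  gcongr
  exact hc.norm.le_tsum _ fun _ _ => norm_nonneg _

lemma norm_add_I_sq (k : ℤ) : ‖(k + Complex.I : ℂ)‖ ^ 2 = 1 + (k : ℝ) ^ 2 := by
  rw [Complex.sq_norm, Complex.normSq_apply]
  simp
  ring

lemma norm_mul_D1_le (c : FC) (h : ℂ) (k : ℤ) :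
    ‖h‖ ^ 2 * ‖D1 c k‖ ^ 2 ≤ ‖(k + Complex.I) * h‖ ^ 2 * ‖c k‖ ^ 2 := by
  rw [norm_D1, norm_mul, mul_pow, mul_pow, norm_add_I_sq, sq_abs]
  nlinarith [mul_nonneg (sq_nonneg ‖h‖) (sq_nonneg ‖c k‖)]

lemma norm_sq_pow_mul (m c : FC) (j : ℕ) (k : ℤ) :
    ‖(m ^ j * c) k‖ ^ 2 = ‖m k‖ ^ (2 * j) * ‖c k‖ ^ 2 := by
  rw [Pi.mul_apply, Pi.pow_apply, norm_mul, norm_pow, mul_pow, ← pow_mul, mul_comm j]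

lemma norm_sq_diff_pow_mul_le {j : ℕ} (hMj : M ≤ j) (hj : j ≤ 2 * M) (δ : ℝ) (v : FC) (h : ℂ)
    (k : ℤ) : ‖(diff h ^ j * v) k‖ ^ 2 ≤ 4 ^ M * diffEnergy M δ v h k := by
  have hmaj := diffMajorant_nonneg M ((k + Complex.I) * h)
  rw [norm_sq_pow_mul, diffEnergy, ← mul_assoc]
  gcongr
  · have := diffMajorant_nonneg M (k * h)
    positivity
  · calc ‖diff h k‖ ^ (2 * j) ≤ (1 + ‖k * h‖ ^ 2) * ‖diffSymbol (k * h)‖ ^ (2 * j) :=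
          le_mul_of_one_le_left (by positivity) (le_add_of_nonneg_right (by positivity))
      _ ≤ 4 ^ M * diffMajorant M (k * h) := one_add_sq_mul_norm_diffSymbol_pow_le hMj hj _
      _ ≤ _ := by gcongr; exact le_add_of_nonneg_right hmaj
  · exact le_add_of_nonneg_right (by positivity)

lemma one_add_sq_mul_norm_twistedDiff_pow_mul_le {j : ℕ} (hMj : M ≤ j) (hj : j ≤ 2 * M) (δ : ℝ)
    (v : FC) (h : ℂ) (k : ℤ) :
    (1 + ‖(k + Complex.I) * h‖ ^ 2) * ‖twistedDiff h k‖ ^ (2 * j) *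
      (‖v k‖ ^ 2 + δ ^ 2 * ‖D1 v k‖ ^ 2) ≤ 4 ^ M * diffEnergy M δ v h k := by
  rw [diffEnergy, ← mul_assoc]
  refine mul_le_mul_of_nonneg_right ?_ (by positivity)
  exact (one_add_sq_mul_norm_diffSymbol_pow_le hMj hj _).trans <|
    mul_le_mul_of_nonneg_left (le_add_of_nonneg_left (diffMajorant_nonneg _ _)) (by positivity)

lemma norm_sq_twistedDiff_pow_mul_add_le {j : ℕ} (hMj : M ≤ j) (hj : j ≤ 2 * M) (δ : ℝ)
    (v : FC) (h : ℂ) (k : ℤ) :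
    δ ^ 2 * ‖(twistedDiff h ^ j * D1 v) k‖ ^ 2 + ‖(twistedDiff h ^ j * v) k‖ ^ 2 ≤
      4 ^ M * diffEnergy M δ v h k := by
  refine le_trans ?_ (one_add_sq_mul_norm_twistedDiff_pow_mul_le hMj hj δ v h k)
  rw [norm_sq_pow_mul, norm_sq_pow_mul]
  have : 0 ≤ ‖(k + Complex.I) * h‖ ^ 2 * ‖twistedDiff h k‖ ^ (2 * j) *
      (‖v k‖ ^ 2 + δ ^ 2 * ‖D1 v k‖ ^ 2) := by positivity
  linarith

lemma sq_mul_norm_sq_twistedDiff_pow_mul_D1_le {j : ℕ} (hMj : M ≤ j) (hj : j ≤ 2 * M) (δ : ℝ)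
    (v : FC) (h : ℂ) (k : ℤ) :
    ‖h‖ ^ 2 * ‖(twistedDiff h ^ j * D1 v) k‖ ^ 2 ≤ 4 ^ M * diffEnergy M δ v h k := by
  refine le_trans ?_ (one_add_sq_mul_norm_twistedDiff_pow_mul_le hMj hj δ v h k)
  calc _ = ‖twistedDiff h k‖ ^ (2 * j) * (‖h‖ ^ 2 * ‖D1 v k‖ ^ 2) := by
        rw [norm_sq_pow_mul]
        ring
    _ ≤ ‖twistedDiff h k‖ ^ (2 * j) * (‖(k + Complex.I) * h‖ ^ 2 * ‖v k‖ ^ 2) :=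
        mul_le_mul_of_nonneg_left (norm_mul_D1_le v h k) (by positivity)
    _ = ‖(k + Complex.I) * h‖ ^ 2 * ‖twistedDiff h k‖ ^ (2 * j) * ‖v k‖ ^ 2 := by ring
    _ ≤ _ := by
        gcongr
        · exact le_add_of_nonneg_left zero_le_one
        · exact le_add_of_nonneg_right (by positivity)

lemma tsum_le_mul_tsum_of_le {ι : Type*} {f g : ι → ℝ} {A : ℝ} (hf : ∀ i, 0 ≤ f i)
    (hfg : ∀ i, f i ≤ A * g i) (hg : Summable g) : ∑' i, f i ≤ A * ∑' i, g i := by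
  rw [← tsum_mul_left]
  exact (Summable.of_nonneg_of_le hf hfg (hg.mul_left A)).tsum_le_tsum hfg (hg.mul_left A)

lemma trilin_norm_twistedDiff_pow_mul (hv : Summable v) (hg : Summable g) (hw : Summable w) (h : ℂ)
    (n : ℕ) :
    trilin v g (fun k => (‖twistedDiff h k‖ ^ (2 * n) : ℝ) * w k) =
      ∑ i ∈ Finset.range (n + 1), (n.choose i : ℂ) *
        trilin (diff h ^ i * v) (twist h ^ i * (twistedDiff h ^ (n - i) * g))
          (twistedDiff h ^ n * w) := by
  simp only [trilin, ← tsum_mul_left]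
  rw [← Summable.tsum_finsetSum fun i _ => (summable_trilin (summable_diff_pow_mul hv h i)
    (summable_twist_pow_mul (summable_twistedDiff_pow_mul hg h _) h i)
    (summable_twistedDiff_pow_mul hw h n)).mul_left _]
  refine tsum_congr fun p => ?_
  set β := twistedDiff h (p.1 + p.2)
  have hnorm : ((‖β‖ ^ (2 * n) : ℝ) : ℂ) = β ^ n * conj β ^ n := by
    rw [← mul_pow, Complex.mul_conj', pow_mul, Complex.ofReal_pow, Complex.ofReal_pow]
  have hbinom : β ^ n = ∑ i ∈ Finset.range (n + 1),
      (twist h p.2 * diff h p.1) ^ i * twistedDiff h p.2 ^ (n - i) * n.choose i := by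
    rw [← add_pow, ← twistedDiff_add]
  rw [map_mul, Complex.conj_ofReal, hnorm, hbinom]
  simp only [Finset.sum_mul, Finset.mul_sum, Pi.mul_apply, Pi.pow_apply, map_mul, map_pow]
  refine Finset.sum_congr rfl fun i _ => ?_
  ring

lemma D1_mul (m c : FC) : D1 (m * c) = m * D1 c := by
  ext k
  simp only [D1, Pi.mul_apply]
  ring

lemma tsum_norm_sq_twistedDiff_pow_le {h : ℂ} (hE : Summable (diffEnergy M δ v h)) :
    ∑' k, ‖(twistedDiff h ^ (2 * M) * v) k‖ ^ 2 ≤ 4 ^ M * ∑' k, diffEnergy M δ v h k :=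
  tsum_le_mul_tsum_of_le (fun k => sq_nonneg _) (fun k =>
    (le_add_of_nonneg_left (by positivity)).trans
      (norm_sq_twistedDiff_pow_mul_add_le (by omega) le_rfl δ v h k)) hE

lemma norm_trilin_twistedDiff_pow_le {F G : FC} {h : ℂ} {A t : ℝ}
    (hE : Summable (diffEnergy M δ v h)) (hv : Summable v) (hS : 0 ≤ S) (hF : Summable F)
    (hG : Summable G) (hA : A ≤ 4 ^ M) (hFS : ∀ x, ‖eval F x‖ ≤ A * S * t)
    (hGE : t ^ 2 * ∑' k, ‖G k‖ ^ 2 ≤ 4 ^ M * ∑' k, diffEnergy M δ v h k) (hA0 : 0 ≤ A) :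
    ‖trilin F G (twistedDiff h ^ (2 * M) * v)‖ ≤ 16 ^ M * (S * ∑' k, diffEnergy M δ v h k) := by
  have hE0 := tsum_diffEnergy_nonneg M δ v h
  calc _ ≤ A * S / 2 * (t ^ 2 * ∑' k, ‖G k‖ ^ 2 +
          ∑' k, ‖(twistedDiff h ^ (2 * M) * v) k‖ ^ 2) :=
        norm_trilin_le (by positivity) hF hG (summable_twistedDiff_pow_mul hv h _) hFS
    _ ≤ A * S / 2 * (4 ^ M * ∑' k, diffEnergy M δ v h k +
          4 ^ M * ∑' k, diffEnergy M δ v h k) := by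
        gcongr
        exact tsum_norm_sq_twistedDiff_pow_le hE
    _ ≤ 4 ^ M * S / 2 * (4 ^ M * ∑' k, diffEnergy M δ v h k +
          4 ^ M * ∑' k, diffEnergy M δ v h k) := by gcongr
    _ = _ := by
        rw [show (16 : ℝ) = 4 * 4 by norm_num, mul_pow]
        ring

section Bounds

variable (hDv : Summable (D1 v)) (hS : ∀ x, ‖eval (D1 v) x‖ ≤ S) {h : ℂ}
  (hE : Summable (diffEnergy M δ v h))
include hDv hS hE

/- The energy cancellation happens in this term, the only one of the Leibniz expansion in which all
differences fall on the differentiated factor. -/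
lemma abs_re_trilin_twistedDiff_pow_le (hδ : ∀ x, |(eval v x).im| ≤ S * δ) :
    |(trilin v (twistedDiff h ^ (2 * M) * D1 v) (twistedDiff h ^ (2 * M) * v)).re| ≤
      16 ^ M * (S * ∑' k, diffEnergy M δ v h k) := by
  have hS0 : 0 ≤ S := (norm_nonneg _).trans (hS 0)
  have hv := summable_of_summable_D1 hDv
  set w := twistedDiff h ^ (2 * M) * v
  have hDw : D1 w = twistedDiff h ^ (2 * M) * D1 v := D1_mul _ _
  have hsw : Summable w := summable_twistedDiff_pow_mul hv h _
  have hsDw : Summable (D1 w) := hDw ▸ summable_twistedDiff_pow_mul hDv h _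
  rw [← hDw]
  calc _ ≤ S * (δ ^ 2 * ∑' k, ‖D1 w k‖ ^ 2 + ∑' k, ‖w k‖ ^ 2) :=
        abs_re_trilin_D1_self_le hDv hsDw hS hδ
    _ = S * ∑' k, (δ ^ 2 * ‖D1 w k‖ ^ 2 + ‖w k‖ ^ 2) := by
        rw [← tsum_mul_left, ((summable_norm_sq hsDw).mul_left _).tsum_add (summable_norm_sq hsw)]
    _ ≤ S * (4 ^ M * ∑' k, diffEnergy M δ v h k) := by
        refine mul_le_mul_of_nonneg_left (tsum_le_mul_tsum_of_le (fun k => by positivity)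
          (fun k => ?_) hE) hS0
        rw [hDw]
        exact norm_sq_twistedDiff_pow_mul_add_le (by omega) le_rfl δ v h k
    _ = 4 ^ M * (S * ∑' k, diffEnergy M δ v h k) := by ring
    _ ≤ _ := by
        have := tsum_diffEnergy_nonneg M δ v h
        gcongr
        norm_num

lemma norm_trilin_diff_pow_succ_le {j : ℕ} (hj : j < M) :
    ‖trilin (diff h ^ (j + 1) * v) (twist h ^ (j + 1) * (twistedDiff h ^ (2 * M - (j + 1)) * D1 v))
      (twistedDiff h ^ (2 * M) * v)‖ ≤ 16 ^ M * (S * ∑' k, diffEnergy M δ v h k) := by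
  have hS0 : 0 ≤ S := (norm_nonneg _).trans (hS 0)
  have hv := summable_of_summable_D1 hDv
  set G := twist h ^ (j + 1) * (twistedDiff h ^ (2 * M - (j + 1)) * D1 v) with hG
  have hsG : Summable G := summable_twist_pow_mul (summable_twistedDiff_pow_mul hDv h _) h _
  have hGE : ‖h‖ ^ 2 * ∑' k, ‖G k‖ ^ 2 ≤ 4 ^ M * ∑' k, diffEnergy M δ v h k := by
    rw [← tsum_mul_left]
    refine tsum_le_mul_tsum_of_le (fun k => by positivity) (fun k => ?_) hE
    rw [hG, norm_sq_pow_mul, norm_twist, one_pow, one_mul]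
    exact sq_mul_norm_sq_twistedDiff_pow_mul_D1_le (by omega) (by omega) δ v h k
  have hF (x : ℝ) : ‖eval (diff h ^ (j + 1) * v) x‖ ≤ 2 ^ j * S * ‖h‖ :=
    (norm_eval_diff_pow_succ_mul_le hDv hS h j x).trans_eq (mul_assoc _ _ _).symm
  refine norm_trilin_twistedDiff_pow_le hE hv hS0 (summable_diff_pow_mul hv h _) hsG ?_ hF hGE
    (by positivity)
  calc (2 : ℝ) ^ j ≤ 4 ^ j := by gcongr; norm_num
    _ ≤ 4 ^ M := pow_le_pow_right₀ (by norm_num) hj.le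

lemma norm_trilin_diff_pow_le {i : ℕ} (hMi : M ≤ i) (hi : i ≤ 2 * M) :
    ‖trilin (diff h ^ i * v) (twist h ^ i * (twistedDiff h ^ (2 * M - i) * D1 v))
      (twistedDiff h ^ (2 * M) * v)‖ ≤ 16 ^ M * (S * ∑' k, diffEnergy M δ v h k) := by
  have hS0 : 0 ≤ S := (norm_nonneg _).trans (hS 0)
  have hv := summable_of_summable_D1 hDv
  have hG (x : ℝ) : ‖eval (twist h ^ i * (twistedDiff h ^ (2 * M - i) * D1 v)) x‖ ≤
      2 ^ (2 * M - i) * S * 1 := by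
    rw [mul_one]
    exact norm_eval_twist_pow_mul_le (norm_eval_twistedDiff_pow_mul_le hDv hS h _) h _ x
  rw [trilin_comm]
  refine norm_trilin_twistedDiff_pow_le hE hv hS0
    (summable_twist_pow_mul (summable_twistedDiff_pow_mul hDv h _) h _)
    (summable_diff_pow_mul hv h _) ?_ hG ?_ (by positivity)
  · calc (2 : ℝ) ^ (2 * M - i) ≤ 2 ^ (2 * M) := pow_le_pow_right₀ (by norm_num) (by omega)
      _ = 4 ^ M := by rw [pow_mul]; norm_num
  · rw [one_pow, one_mul]
    exact tsum_le_mul_tsum_of_le (fun k => sq_nonneg _) (norm_sq_diff_pow_mul_le hMi hi δ v h) hE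

lemma abs_re_trilin_norm_twistedDiff_pow_le (hδ : ∀ x, |(eval v x).im| ≤ S * δ) :
    |(trilin v (D1 v) (fun k => (‖twistedDiff h k‖ ^ (4 * M) : ℝ) * v k)).re| ≤
      64 ^ M * (S * ∑' k, diffEnergy M δ v h k) := by
  have hv := summable_of_summable_D1 hDv
  have hterm (i : ℕ) (hi : i ∈ Finset.range (2 * M + 1)) :
      |(trilin (diff h ^ i * v) (twist h ^ i * (twistedDiff h ^ (2 * M - i) * D1 v))
        (twistedDiff h ^ (2 * M) * v)).re| ≤ 16 ^ M * (S * ∑' k, diffEnergy M δ v h k) := by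
    rcases i with _ | j
    · simpa only [pow_zero, one_mul, Nat.sub_zero] using
        abs_re_trilin_twistedDiff_pow_le hDv hS hE hδ
    · refine (Complex.abs_re_le_norm _).trans ?_
      rcases lt_or_ge j M with hj | hj
      · exact norm_trilin_diff_pow_succ_le hDv hS hE hj
      · exact norm_trilin_diff_pow_le hDv hS hE (by omega)
          (by simpa [Nat.lt_succ_iff] using hi)
  rw [show 4 * M = 2 * (2 * M) by ring, trilin_norm_twistedDiff_pow_mul hv hDv hv, Complex.re_sum]
  calc _ ≤ ∑ i ∈ Finset.range (2 * M + 1), ((2 * M).choose i : ℝ) *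
          (16 ^ M * (S * ∑' k, diffEnergy M δ v h k)) := by
        refine (Finset.abs_sum_le_sum_abs _ _).trans (Finset.sum_le_sum fun i hi => ?_)
        rw [← Complex.ofReal_natCast, Complex.re_ofReal_mul, abs_mul, Nat.abs_cast]
        gcongr
        exact hterm i hi
    _ = _ := by
        rw [← Finset.sum_mul, ← Nat.cast_sum, Nat.sum_range_choose, ← mul_assoc,
          show (64 : ℝ) = 4 * 16 by norm_num, mul_pow, pow_mul]
        norm_num

end Bounds

end Localized

section ScaleIntegral

lemma map_mul_left_volume {ζ : ℂ} (hζ : ζ ≠ 0) :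
    (volume : Measure ℂ).map (ζ * ·) = ENNReal.ofReal (‖ζ‖ ^ 2)⁻¹ • volume := by
  have hdet : LinearMap.det (Algebra.lmul ℝ ℂ ζ) = ‖ζ‖ ^ 2 := by
    rw [← Algebra.norm_apply, Algebra.norm_complex_apply, Complex.normSq_eq_norm_sq]
  have hpos : 0 < ‖ζ‖ ^ 2 := by positivity
  have h := Measure.map_linearMap_addHaar_eq_smul_addHaar volume (hdet ▸ hpos.ne')
  rwa [hdet, abs_of_pos (inv_pos.mpr hpos)] at h

lemma integrable_comp_mul_left {f : ℂ → ℝ} (hf : Integrable f) {ζ : ℂ} (hζ : ζ ≠ 0) :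
    Integrable fun h => f (ζ * h) := by
  refine ((Homeomorph.mulLeft₀ ζ hζ).measurableEmbedding.integrable_map_iff (g := f)).mp ?_
  rw [Homeomorph.coe_mulLeft₀, map_mul_left_volume hζ]
  exact hf.smul_measure ENNReal.ofReal_ne_top

lemma integral_comp_mul_left_complex (f : ℂ → ℝ) {ζ : ℂ} (hζ : ζ ≠ 0) :
    ∫ h, f (ζ * h) = (‖ζ‖ ^ 2)⁻¹ * ∫ h, f h := by
  have h := (Homeomorph.mulLeft₀ ζ hζ).measurableEmbedding.integral_map (μ := volume) f
  rw [Homeomorph.coe_mulLeft₀, map_mul_left_volume hζ, integral_smul_measure] at h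
  rw [← h, ENNReal.toReal_ofReal (by positivity), smul_eq_mul]

/-- The homogeneous weight which turns dilation by `ζ` into multiplication by
`‖ζ‖ ^ (2 * s)` of integrals over `ℂ`. -/
def scaleWeight (s : ℝ) (h : ℂ) : ℝ := ‖h‖ ^ (-2 - 2 * s)

lemma scaleWeight_nonneg (s : ℝ) (h : ℂ) : 0 ≤ scaleWeight s h := rpow_nonneg (norm_nonneg h) _

lemma scaleWeight_mul_comp_eq (s : ℝ) (φ : ℂ → ℝ) {ζ : ℂ} (hζ : ζ ≠ 0) (h : ℂ) :
    scaleWeight s h * φ (ζ * h) =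
      ‖ζ‖ ^ (2 * s) * ‖ζ‖ ^ 2 * (scaleWeight s (ζ * h) * φ (ζ * h)) := by
  rw [← mul_assoc]
  congr 1
  have hpos : 0 < ‖ζ‖ := norm_pos_iff.mpr hζ
  rw [scaleWeight, scaleWeight, norm_mul, mul_rpow hpos.le (norm_nonneg h), ← rpow_natCast ‖ζ‖ 2,
    ← rpow_add hpos, ← mul_assoc, ← rpow_add hpos,
    show 2 * s + ((2 : ℕ) : ℝ) + (-2 - 2 * s) = 0 by push_cast; ring, rpow_zero, one_mul]

variable {s : ℝ} {φ : ℂ → ℝ}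

lemma integrable_scaleWeight_mul_comp (h0 : φ 0 = 0)
    (hφ : Integrable fun h => scaleWeight s h * φ h) (ζ : ℂ) :
    Integrable fun h => scaleWeight s h * φ (ζ * h) := by
  rcases eq_or_ne ζ 0 with rfl | hζ
  · simp only [zero_mul, h0, mul_zero]
    exact integrable_zero _ _ _
  · simp only [scaleWeight_mul_comp_eq s φ hζ]
    exact (integrable_comp_mul_left hφ hζ).const_mul (‖ζ‖ ^ (2 * s) * ‖ζ‖ ^ 2)

lemma integral_scaleWeight_mul_comp (hs : s ≠ 0) (h0 : φ 0 = 0) (ζ : ℂ) :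
    ∫ h, scaleWeight s h * φ (ζ * h) = ‖ζ‖ ^ (2 * s) * ∫ h, scaleWeight s h * φ h := by
  rcases eq_or_ne ζ 0 with rfl | hζ
  · rw [norm_zero, zero_rpow (by simpa using hs)]
    simp only [zero_mul, h0, mul_zero, integral_zero]
  · simp only [scaleWeight_mul_comp_eq s φ hζ]
    rw [integral_const_mul, integral_comp_mul_left_complex (fun h => scaleWeight s h * φ h) hζ,
      mul_assoc, mul_inv_cancel_left₀ (by positivity)]

lemma one_add_sq_mul_norm_diffSymbol_sq_le (z : ℂ) :
    (1 + ‖z‖ ^ 2) * ‖diffSymbol z‖ ^ 2 ≤ 5 * ‖z‖ ^ 2 := by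
  have h2 : ‖diffSymbol z‖ ^ 2 ≤ 2 ^ 2 := by gcongr; exact norm_diffSymbol_le_two z
  have hz : ‖diffSymbol z‖ ^ 2 ≤ ‖z‖ ^ 2 := by gcongr; exact norm_diffSymbol_le z
  nlinarith [sq_nonneg ‖z‖]

lemma norm_diffSymbol_pow_le {M : ℕ} (hs : 0 ≤ s) (hM : s + 1 ≤ M) (z : ℂ) :
    ‖diffSymbol z‖ ^ (2 * M) ≤ 4 ^ M * ((5 * ‖z‖ ^ 2) / (1 + ‖z‖ ^ 2)) ^ (s + 1) := by
  set b := ‖diffSymbol z‖ ^ 2 / 4 with hb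
  have hb0 : 0 ≤ b := by positivity
  have hb1 : b ≤ 1 := by
    have : ‖diffSymbol z‖ ^ 2 ≤ 2 ^ 2 := by gcongr; exact norm_diffSymbol_le_two z
    linarith
  have hbz : b ≤ 5 * ‖z‖ ^ 2 / (1 + ‖z‖ ^ 2) := by
    rw [le_div_iff₀ (by positivity), hb, div_mul_eq_mul_div, mul_comm]
    linarith [one_add_sq_mul_norm_diffSymbol_sq_le z, sq_nonneg ‖z‖]
  calc _ = 4 ^ M * b ^ M := by rw [← mul_pow, pow_mul, hb, mul_div_cancel₀ _ four_ne_zero]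
    _ ≤ _ := by
      gcongr
      rw [← rpow_natCast]
      exact (rpow_le_rpow_of_exponent_ge_of_imp hb0 hb1 hM fun _ h => by linarith).trans
        (rpow_le_rpow hb0 hbz (by linarith))

lemma scaleWeight_mul_diffMajorant_le {M : ℕ} (hs : 0 ≤ s) (hM : s + 1 ≤ M) (z : ℂ) :
    scaleWeight s z * diffMajorant M z ≤ 4 ^ M * 5 ^ (s + 1) * (1 + ‖z‖ ^ 2) ^ (-(2 * s) / 2) := by
  have hle : scaleWeight s z * (‖z‖ ^ 2) ^ (s + 1) ≤ 1 := by
    rw [scaleWeight, ← rpow_natCast, ← rpow_mul (norm_nonneg z)]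
    push_cast
    rw [show -2 - 2 * s = -(2 * (s + 1)) by ring, rpow_neg (norm_nonneg z)]
    exact inv_mul_le_one
  have h1 : 0 < 1 + ‖z‖ ^ 2 := by positivity
  calc _ ≤ scaleWeight s z * ((1 + ‖z‖ ^ 2) *
          (4 ^ M * ((5 * ‖z‖ ^ 2) / (1 + ‖z‖ ^ 2)) ^ (s + 1))) := by
        refine mul_le_mul_of_nonneg_left ?_ (scaleWeight_nonneg s z)
        exact mul_le_mul_of_nonneg_left (norm_diffSymbol_pow_le hs hM z) h1.le
    _ = 4 ^ M * 5 ^ (s + 1) * (1 + ‖z‖ ^ 2) ^ (-(2 * s) / 2) *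
          (scaleWeight s z * (‖z‖ ^ 2) ^ (s + 1)) := by
        rw [div_rpow (by positivity) h1.le, mul_rpow (by norm_num) (by positivity), rpow_add h1,
          rpow_one, show -(2 * s) / 2 = -s by ring, rpow_neg h1.le]
        field_simp
    _ ≤ _ := mul_le_of_le_one_right (by positivity) hle

lemma measurable_scaleWeight (s : ℝ) : Measurable (scaleWeight s) :=
  measurable_norm.pow_const _

lemma integrable_scaleWeight_mul_diffMajorant {M : ℕ} (hs : 1 < s) (hM : s + 1 ≤ M) :
    Integrable fun h => scaleWeight s h * diffMajorant M h := by
  have hmaj : Integrable fun h : ℂ => (1 + ‖h‖ ^ 2) ^ (-(2 * s) / 2) :=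
    integrable_rpow_neg_one_add_norm_sq (by rw [Complex.finrank_real_complex]; push_cast; linarith)
  have hmeas : Measurable (diffMajorant M) := by unfold diffMajorant; fun_prop
  refine (hmaj.const_mul (4 ^ M * 5 ^ (s + 1))).mono'
    ((measurable_scaleWeight s).mul hmeas).aestronglyMeasurable (.of_forall fun h => ?_)
  rw [Real.norm_of_nonneg (mul_nonneg (scaleWeight_nonneg s h) (diffMajorant_nonneg M h))]
  exact scaleWeight_mul_diffMajorant_le (by linarith) hM h

lemma integrable_scaleWeight_mul_norm_diffSymbol_pow {M : ℕ} (hs : 1 < s) (hM : s + 1 ≤ M) :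
    Integrable fun h => scaleWeight s h * ‖diffSymbol h‖ ^ (4 * M) := by
  refine ((integrable_scaleWeight_mul_diffMajorant hs hM).const_mul (4 ^ M)).mono'
    ((measurable_scaleWeight s).mul (by fun_prop)).aestronglyMeasurable (.of_forall fun h => ?_)
  rw [Real.norm_of_nonneg (mul_nonneg (scaleWeight_nonneg s h) (by positivity)), mul_left_comm,
    show 4 * M = 2 * (2 * M) by ring]
  refine mul_le_mul_of_nonneg_left ?_ (scaleWeight_nonneg s h)
  exact (le_mul_of_one_le_left (by positivity) (le_add_of_nonneg_right (by positivity))).trans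
    (one_add_sq_mul_norm_diffSymbol_pow_le (by omega) le_rfl h)

lemma integral_scaleWeight_mul_norm_diffSymbol_pow_pos {M : ℕ} (hs : 1 < s) (hM : s + 1 ≤ M) :
    0 < ∫ h, scaleWeight s h * ‖diffSymbol h‖ ^ (4 * M) := by
  rw [integral_pos_iff_support_of_nonneg
    (fun h => mul_nonneg (scaleWeight_nonneg s h) (by positivity))
    (integrable_scaleWeight_mul_norm_diffSymbol_pow hs hM)]
  have hopen : IsOpen {h : ℂ | h ≠ 0 ∧ diffSymbol h ≠ 0} :=
    isOpen_ne.inter (isOpen_ne_fun continuous_diffSymbol continuous_const)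
  have hmem : (π : ℂ) ∈ {h : ℂ | h ≠ 0 ∧ diffSymbol h ≠ 0} := by
    refine ⟨by exact_mod_cast pi_ne_zero, ?_⟩
    rw [diffSymbol, Complex.ofReal_re, Complex.exp_pi_mul_I]
    norm_num
  refine (hopen.measure_pos volume ⟨_, hmem⟩).trans_le (measure_mono fun h hh => ?_)
  exact mul_ne_zero (rpow_pos_of_pos (norm_pos_iff.mpr hh.1) _).ne'
    (pow_ne_zero _ (norm_ne_zero_iff.mpr hh.2))

end ScaleIntegral

section Interchange

variable {α ι κ : Type*} [Countable ι] [Countable κ] [MeasurableSpace α] {μ : Measure α}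

lemma ae_summable_of_summable_integral {G : κ → α → ℝ} (hG : ∀ i, Integrable (G i) μ)
    (hG0 : ∀ i x, 0 ≤ G i x) (hGs : Summable fun i => ∫ x, G i x ∂μ) :
    ∀ᵐ x ∂μ, Summable fun i => G i x := by
  have heq (i : κ) : eLpNorm (G i) 1 μ = ENNReal.ofReal (∫ x, G i x ∂μ) := by
    rw [eLpNorm_one_eq_lintegral_enorm, ← ofReal_integral_norm_eq_lintegral_enorm (hG i)]
    simp only [Real.norm_of_nonneg (hG0 i _)]
  filter_upwards [summable_norm_of_tsum_eLpNorm_ne_top le_rfl (fun i => (hG i).1)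
    (by simpa only [heq] using hGs.tsum_ofReal_ne_top)] with x hx
  exact hx.of_norm

lemma abs_tsum_integral_le_tsum_integral {F : ι → α → ℝ} {G : κ → α → ℝ}
    (hF : ∀ i, Integrable (F i) μ) (hFs : Summable fun i => ∫ x, ‖F i x‖ ∂μ)
    (hG : ∀ i, Integrable (G i) μ) (hG0 : ∀ i x, 0 ≤ G i x)
    (hGs : Summable fun i => ∫ x, G i x ∂μ)
    (hle : ∀ᵐ x ∂μ, |∑' i, F i x| ≤ ∑' i, G i x) :
    |∑' i, ∫ x, F i x ∂μ| ≤ ∑' i, ∫ x, G i x ∂μ := by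
  have h0 (i : κ) : 0 ≤ ∫ x, G i x ∂μ := integral_nonneg (hG0 i)
  rw [integral_tsum_of_summable_integral_norm hF hFs,
    ← ENNReal.ofReal_le_ofReal_iff (tsum_nonneg h0), ← Real.enorm_eq_ofReal_abs]
  calc _ ≤ ∫⁻ x, ‖∑' i, F i x‖ₑ ∂μ := enorm_integral_le_lintegral_enorm _
    _ ≤ ∫⁻ x, ∑' i, ENNReal.ofReal (G i x) ∂μ := by
        refine lintegral_mono_ae ?_
        filter_upwards [ae_summable_of_summable_integral hG hG0 hGs, hle] with x hx hlex
        rw [← ENNReal.ofReal_tsum_of_nonneg (hG0 · x) hx, Real.enorm_eq_ofReal_abs]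
        exact ENNReal.ofReal_le_ofReal hlex
    _ = ∑' i, ENNReal.ofReal (∫ x, G i x ∂μ) := by
        rw [lintegral_tsum fun i => (hG i).1.aemeasurable.ennreal_ofReal]
        simp only [ofReal_integral_eq_lintegral_ofReal (hG _) (.of_forall (hG0 _))]
    _ = _ := (ENNReal.ofReal_tsum_of_nonneg h0 hGs).symm

end Interchange

section Weights

variable {s t : ℝ} {c d e u : FC} (k : ℤ)

lemma wt_pos (s : ℝ) : 0 < wt s k := rpow_pos_of_pos (by positivity) _

lemma wt_mono (hst : s ≤ t) : wt s k ≤ wt t k :=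
  rpow_le_rpow_of_exponent_le (le_add_of_nonneg_right (sq_nonneg _)) hst

lemma one_le_wt (hs : 0 ≤ s) : 1 ≤ wt s k :=
  one_le_rpow (le_add_of_nonneg_right (sq_nonneg _)) hs

lemma wt_add_one (s : ℝ) : wt (s + 1) k = wt s k * (1 + (k : ℝ) ^ 2) := by
  rw [wt, rpow_add (by positivity), rpow_one, wt]

lemma norm_add_I_rpow (s : ℝ) : ‖(k + Complex.I : ℂ)‖ ^ (2 * s) = wt s k := by
  rw [rpow_mul (norm_nonneg _), rpow_two, norm_add_I_sq, wt]

lemma norm_intCast_rpow_le (hs : 0 ≤ s) : ‖(k : ℂ)‖ ^ (2 * s) ≤ wt s k := by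
  rw [rpow_mul (norm_nonneg _), rpow_two, Complex.norm_intCast, sq_abs]
  exact rpow_le_rpow (sq_nonneg _) (le_add_of_nonneg_left zero_le_one) hs

lemma norm_D1_le (c : FC) : ‖D1 c k‖ ≤ wt 1 k * ‖c k‖ := by
  rw [norm_D1, wt, rpow_one]
  gcongr
  nlinarith [sq_abs (k : ℝ), sq_nonneg (|(k : ℝ)| - 1), abs_nonneg (k : ℝ)]

lemma wt_mul_norm_D1_sq_le (s : ℝ) (c : FC) :
    wt s k * ‖D1 c k‖ ^ 2 ≤ wt (s + 1) k * ‖c k‖ ^ 2 := by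
  have := wt_pos k s
  rw [norm_D1, mul_pow, sq_abs, wt_add_one, ← mul_assoc]
  gcongr
  linarith

lemma hsNorm_sq (s : ℝ) (c : FC) : hsNorm s c ^ 2 = ∑' k, wt s k * ‖c k‖ ^ 2 :=
  sq_sqrt (tsum_nonneg fun k => mul_nonneg (wt_pos k s).le (sq_nonneg _))

lemma memHs_of_le (hst : s ≤ t) (hc : memHs t c) : memHs s c :=
  .of_nonneg_of_le (fun k => mul_nonneg (wt_pos k s).le (sq_nonneg _))
    (fun k => mul_le_mul_of_nonneg_right (wt_mono k hst) (sq_nonneg _)) hc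

lemma memHs_D1 (hc : memHs (s + 1) c) : memHs s (D1 c) :=
  .of_nonneg_of_le (fun k => mul_nonneg (wt_pos k s).le (sq_nonneg _))
    (fun k => wt_mul_norm_D1_sq_le k s c) hc

/-- The Fourier coefficients of a function whose coefficients against the Sobolev weight of order
`s` are absolutely summable, a convenient substitute for smoothness. -/
def WtSummable (s : ℝ) (c : FC) : Prop := Summable fun k : ℤ => (wt s k : ℂ) * c k

lemma WtSummable.of_le (hst : s ≤ t) (hc : WtSummable t c) : WtSummable s c := by
  refine .of_norm_bounded hc.norm fun k => ?_
  rw [norm_mul, norm_mul, Complex.norm_real, Complex.norm_real,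
    norm_of_nonneg (wt_pos k s).le, norm_of_nonneg (wt_pos k t).le]
  gcongr
  exact wt_mono k hst

lemma WtSummable.memHs (hs : 0 ≤ s) (hc : WtSummable s c) : memHs s c := by
  refine .of_nonneg_of_le (fun k => mul_nonneg (wt_pos k s).le (sq_nonneg _)) (fun k => ?_)
    (summable_norm_sq hc)
  rw [norm_mul, mul_pow, Complex.norm_real, norm_of_nonneg (wt_pos k s).le]
  gcongr
  exact le_self_pow₀ (one_le_wt k hs) two_ne_zero

lemma WtSummable.summable_D1 (hs : 1 ≤ s) (hc : WtSummable s c) : Summable (D1 c) := by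
  refine .of_norm_bounded (hc.of_le hs).norm fun k => (norm_D1_le k c).trans_eq ?_
  rw [norm_mul, Complex.norm_real, norm_of_nonneg (wt_pos k 1).le]

lemma hsInner_mul (hc : Summable c) (hd : Summable d) (he : WtSummable s e) :
    hsInner s (mul c d) e = (trilin c d fun k => wt s k * e k).re := by
  let shear : ℤ × ℤ ≃ ℤ × ℤ :=
    { toFun := fun p => (p.2, p.1 - p.2)
      invFun := fun p => (p.1 + p.2, p.1)
      left_inv := fun p => by simp
      right_inv := fun p => by simp }
  have hsum := (shear.summable_iff).mpr (summable_trilin hc hd he)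
  rw [hsInner, trilin, ← shear.tsum_eq]
  refine congrArg Complex.re (.trans (tsum_congr fun k => ?_) hsum.tsum_prod.symm)
  simp only [Function.comp_apply, shear, Equiv.coe_fn_mk, mul, add_sub_cancel, map_mul,
    Complex.conj_ofReal]
  rw [tsum_mul_right, mul_left_comm]

lemma hasSum_re_trilin_ofReal_mul {m : ℤ → ℝ} (hc : Summable c) (hd : Summable d)
    (he : Summable fun k => (m k : ℂ) * e k) :
    HasSum (fun p : ℤ × ℤ => m (p.1 + p.2) * (c p.1 * d p.2 * conj (e (p.1 + p.2))).re)
      (trilin c d fun k => m k * e k).re := by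
  refine HasSum.congr_fun (Complex.hasSum_re (summable_trilin hc hd he).hasSum) fun p => ?_
  rw [map_mul, Complex.conj_ofReal, mul_left_comm, Complex.re_ofReal_mul]

lemma summable_wt (hs : s < -1 / 2) : Summable (wt s) := by
  refine .of_norm_bounded_eventually (summable_abs_int_rpow (b := -(2 * s)) (by linarith)) ?_
  filter_upwards [(Set.finite_singleton (0 : ℤ)).compl_mem_cofinite] with k hk
  have hk : (k : ℝ) ≠ 0 := Int.cast_ne_zero.mpr hk
  rw [norm_of_nonneg (wt_pos k s).le, neg_neg, rpow_mul (abs_nonneg _), rpow_two, sq_abs, wt]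
  exact rpow_le_rpow_of_nonpos (by positivity) (le_add_of_nonneg_left zero_le_one) (by linarith)

lemma memHs.summable_D1 (hs : 3 / 2 < s) (hu : memHs s u) : Summable (D1 u) := by
  refine .of_norm_bounded (hu.add (summable_wt (s := 1 - s) (by linarith))) fun k => ?_
  have hw := wt_pos k s
  have hw' := wt_pos k (1 - s)
  have hD : ‖D1 u k‖ ^ 2 ≤ wt s k * ‖u k‖ ^ 2 * wt (1 - s) k := by
    rw [mul_right_comm, wt, wt, ← rpow_add (by positivity), add_sub_cancel, ← wt]
    simpa [wt] using wt_mul_norm_D1_sq_le k 0 u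
  have hu0 : 0 ≤ wt s k * ‖u k‖ ^ 2 := by positivity
  refine abs_le_of_sq_le_sq' ?_ (by positivity) |>.2
  nlinarith

end Weights

section EnergyEstimate

variable {s S δ : ℝ} {M : ℕ} {v : FC}

lemma diffSymbol_zero : diffSymbol 0 = 0 := by
  rw [diffSymbol, Complex.zero_re, Complex.ofReal_zero, zero_mul, Complex.exp_zero, sub_self]

lemma diffMajorant_zero (hM : M ≠ 0) : diffMajorant M 0 = 0 := by
  rw [diffMajorant, diffSymbol_zero, norm_zero, zero_pow (n := 2 * M) (by omega), mul_zero]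

lemma ne_zero_of_add_one_le (hs : 1 < s) (hM : s + 1 ≤ M) : M ≠ 0 := by
  rintro rfl
  rw [Nat.cast_zero] at hM
  linarith

lemma integrable_scaleWeight_mul_norm_twistedDiff_pow (hs : 1 < s) (hM : s + 1 ≤ M) (k : ℤ) :
    Integrable fun h => scaleWeight s h * ‖twistedDiff h k‖ ^ (4 * M) := by
  have hM0 := ne_zero_of_add_one_le hs hM
  exact integrable_scaleWeight_mul_comp (φ := fun z => ‖diffSymbol z‖ ^ (4 * M))
    (by rw [diffSymbol_zero, norm_zero, zero_pow (by omega)])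
    (integrable_scaleWeight_mul_norm_diffSymbol_pow hs hM) (k + Complex.I)

lemma integral_scaleWeight_mul_norm_twistedDiff_pow (hs : 1 < s) (hM : s + 1 ≤ M) (k : ℤ) :
    ∫ h, scaleWeight s h * ‖twistedDiff h k‖ ^ (4 * M) =
      wt s k * ∫ h, scaleWeight s h * ‖diffSymbol h‖ ^ (4 * M) := by
  have hM0 := ne_zero_of_add_one_le hs hM
  rw [← norm_add_I_rpow, ← integral_scaleWeight_mul_comp (by linarith)
    (by rw [diffSymbol_zero, norm_zero, zero_pow (by omega)])]
  rfl

lemma integrable_scaleWeight_mul_diffEnergy (hs : 1 < s) (hM : s + 1 ≤ M) (δ : ℝ) (v : FC)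
    (k : ℤ) : Integrable fun h => scaleWeight s h * diffEnergy M δ v h k := by
  have hM0 := ne_zero_of_add_one_le hs hM
  have hint := integrable_scaleWeight_mul_comp (diffMajorant_zero hM0)
    (integrable_scaleWeight_mul_diffMajorant hs hM)
  simp only [diffEnergy, ← mul_assoc, mul_add (scaleWeight s _)]
  exact ((hint k).add (hint (k + Complex.I))).mul_const (‖v k‖ ^ 2 + δ ^ 2 * ‖D1 v k‖ ^ 2)

lemma integral_scaleWeight_mul_diffEnergy_le (hs : 1 < s) (hM : s + 1 ≤ M) (δ : ℝ) (v : FC)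
    (k : ℤ) : ∫ h, scaleWeight s h * diffEnergy M δ v h k ≤
      2 * (∫ h, scaleWeight s h * diffMajorant M h) *
        (wt s k * ‖v k‖ ^ 2 + δ ^ 2 * (wt s k * ‖D1 v k‖ ^ 2)) := by
  have hM0 := ne_zero_of_add_one_le hs hM
  have h0 := diffMajorant_zero hM0
  have hint := integrable_scaleWeight_mul_comp h0 (integrable_scaleWeight_mul_diffMajorant hs hM)
  have hI : 0 ≤ ∫ h, scaleWeight s h * diffMajorant M h :=
    integral_nonneg fun h => mul_nonneg (scaleWeight_nonneg s h) (diffMajorant_nonneg M h)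
  simp only [diffEnergy, ← mul_assoc, mul_add (scaleWeight s _)]
  rw [integral_mul_const, integral_add (hint k) (hint (k + Complex.I)),
    integral_scaleWeight_mul_comp (by linarith) h0, integral_scaleWeight_mul_comp (by linarith) h0,
    norm_add_I_rpow]
  calc _ ≤ (wt s k * (∫ h, scaleWeight s h * diffMajorant M h) +
          wt s k * ∫ h, scaleWeight s h * diffMajorant M h) *
          (‖v k‖ ^ 2 + δ ^ 2 * ‖D1 v k‖ ^ 2) := by
        gcongr
        exact norm_intCast_rpow_le k (by linarith)
    _ = _ := by ring

lemma hasSum_weighted_energy (hv : memHs s v) (hDv : memHs s (D1 v)) (δ : ℝ) :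
    HasSum (fun k => wt s k * ‖v k‖ ^ 2 + δ ^ 2 * (wt s k * ‖D1 v k‖ ^ 2))
      (hsNorm s v ^ 2 + δ ^ 2 * hsNorm s (D1 v) ^ 2) := by
  rw [hsNorm_sq, hsNorm_sq]
  exact hv.hasSum.add (hDv.hasSum.mul_left _)

lemma summable_integral_scaleWeight_mul_diffEnergy (hs : 1 < s) (hM : s + 1 ≤ M) (δ : ℝ)
    (hv : memHs s v) (hDv : memHs s (D1 v)) :
    Summable fun k => ∫ h, scaleWeight s h * diffEnergy M δ v h k :=
  .of_nonneg_of_le (fun k => integral_nonneg fun h =>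
      mul_nonneg (scaleWeight_nonneg s h) (diffEnergy_nonneg M δ v h k))
    (integral_scaleWeight_mul_diffEnergy_le hs hM δ v)
    ((hasSum_weighted_energy hv hDv δ).summable.mul_left _)

lemma tsum_integral_scaleWeight_mul_diffEnergy_le (hs : 1 < s) (hM : s + 1 ≤ M) (δ : ℝ)
    (hv : memHs s v) (hDv : memHs s (D1 v)) :
    ∑' k, ∫ h, scaleWeight s h * diffEnergy M δ v h k ≤
      2 * (∫ h, scaleWeight s h * diffMajorant M h) *
        (hsNorm s v ^ 2 + δ ^ 2 * hsNorm s (D1 v) ^ 2) := by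
  have hsum := (hasSum_weighted_energy hv hDv δ).mul_left
    (2 * ∫ h, scaleWeight s h * diffMajorant M h)
  rw [← hsum.tsum_eq]
  exact (summable_integral_scaleWeight_mul_diffEnergy hs hM δ hv hDv).tsum_le_tsum
    (integral_scaleWeight_mul_diffEnergy_le hs hM δ v) hsum.summable

/- Almost every scale contributes a finite energy, and there the localised estimate applies. -/
lemma ae_abs_scaleWeight_mul_re_trilin_le (hs : 1 < s) (hM : s + 1 ≤ M) (hv : WtSummable (s + 1) v)
    (hS : ∀ x, ‖eval (D1 v) x‖ ≤ S) (hδ : ∀ x, |(eval v x).im| ≤ S * δ) :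
    ∀ᵐ h : ℂ, |scaleWeight s h *
        (trilin v (D1 v) fun k => (‖twistedDiff h k‖ ^ (4 * M) : ℝ) * v k).re| ≤
      ∑' k, 64 ^ M * S * (scaleWeight s h * diffEnergy M δ v h k) := by
  have hmem := hv.memHs (by linarith)
  have hfin := ae_summable_of_summable_integral
    (integrable_scaleWeight_mul_diffEnergy hs hM δ v)
    (fun k h => mul_nonneg (scaleWeight_nonneg s h) (diffEnergy_nonneg M δ v h k))
    (summable_integral_scaleWeight_mul_diffEnergy hs hM δ
      (memHs_of_le (by linarith) hmem) (memHs_D1 hmem))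
  filter_upwards [hfin, compl_mem_ae_iff.mpr (measure_singleton (0 : ℂ))] with h hsum h0
  have hpos : 0 < scaleWeight s h := rpow_pos_of_pos (norm_pos_iff.mpr h0) _
  have hE : Summable (diffEnergy M δ v h) := (summable_mul_left_iff hpos.ne').mp hsum
  rw [tsum_mul_left, tsum_mul_left, abs_mul, abs_of_pos hpos, mul_left_comm]
  gcongr
  rw [mul_assoc]
  exact abs_re_trilin_norm_twistedDiff_pow_le (hv.summable_D1 (by linarith)) hS hE hδ

lemma tsum_scaleWeight_mul_norm_twistedDiff_pow_mul_re (hv : Summable v) (hDv : Summable (D1 v))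
    (s : ℝ) (M : ℕ) (h : ℂ) :
    ∑' p : ℤ × ℤ, scaleWeight s h * ‖twistedDiff h (p.1 + p.2)‖ ^ (4 * M) *
        (v p.1 * D1 v p.2 * conj (v (p.1 + p.2))).re =
      scaleWeight s h *
        (trilin v (D1 v) fun k => (‖twistedDiff h k‖ ^ (4 * M) : ℝ) * v k).re := by
  have hsum : Summable fun k => ((‖twistedDiff h k‖ ^ (4 * M) : ℝ) : ℂ) * v k :=
    .of_norm_bounded (summable_twistedDiff_pow_mul hv h (4 * M)).norm fun k => by
      rw [Pi.mul_apply, Pi.pow_apply, norm_mul, norm_mul, norm_pow, Complex.norm_real, norm_pow,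
        norm_norm]
  simp only [mul_assoc (scaleWeight s h), tsum_mul_left]
  rw [(hasSum_re_trilin_ofReal_mul hv hDv hsum).tsum_eq]

lemma integral_mul_abs_hsInner_mul_D1_self_le (hs : 1 < s) (hM : s + 1 ≤ M)
    (hv : WtSummable (s + 1) v) (hS : ∀ x, ‖eval (D1 v) x‖ ≤ S)
    (hδ : ∀ x, |(eval v x).im| ≤ S * δ) :
    (∫ h, scaleWeight s h * ‖diffSymbol h‖ ^ (4 * M)) * |hsInner s (mul v (D1 v)) v| ≤
      64 ^ M * S * ∑' k, ∫ h, scaleWeight s h * diffEnergy M δ v h k := by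
  set κ := ∫ h, scaleWeight s h * ‖diffSymbol h‖ ^ (4 * M)
  have hκ : 0 < κ := integral_scaleWeight_mul_norm_diffSymbol_pow_pos hs hM
  have hS0 : 0 ≤ S := (norm_nonneg _).trans (hS 0)
  have hDv : Summable (D1 v) := hv.summable_D1 (by linarith)
  have hsv := summable_of_summable_D1 hDv
  have hwv : WtSummable s v := hv.of_le (le_add_of_nonneg_right zero_le_one)
  have hmem := hv.memHs (by linarith)
  set r : ℤ × ℤ → ℝ := fun p => (v p.1 * D1 v p.2 * conj (v (p.1 + p.2))).re
  set F : ℤ × ℤ → ℂ → ℝ :=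
    fun p h => scaleWeight s h * ‖twistedDiff h (p.1 + p.2)‖ ^ (4 * M) * r p
  have hinner : HasSum (fun p => wt s (p.1 + p.2) * r p) (hsInner s (mul v (D1 v)) v) :=
    hsInner_mul hsv hDv hwv ▸ hasSum_re_trilin_ofReal_mul hsv hDv hwv
  have hint (p : ℤ × ℤ) (x : ℝ) : ∫ h, scaleWeight s h * ‖twistedDiff h (p.1 + p.2)‖ ^ (4 * M) * x =
      κ * (wt s (p.1 + p.2) * x) := by
    rw [integral_mul_const, integral_scaleWeight_mul_norm_twistedDiff_pow hs hM, mul_comm _ κ,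
      mul_assoc]
  have hnorm (p : ℤ × ℤ) : ∫ h, ‖F p h‖ = κ * |wt s (p.1 + p.2) * r p| := by
    simp only [F, norm_mul, norm_norm, norm_pow, norm_of_nonneg (scaleWeight_nonneg s _)]
    rw [hint, abs_mul, abs_of_pos (wt_pos _ s), Real.norm_eq_abs]
  have hmain := abs_tsum_integral_le_tsum_integral (F := F)
    (fun p => (integrable_scaleWeight_mul_norm_twistedDiff_pow hs hM _).mul_const _)
    (by simpa only [hnorm] using hinner.summable.abs.mul_left κ)
    (fun k => (integrable_scaleWeight_mul_diffEnergy hs hM δ v k).const_mul (64 ^ M * S))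
    (fun k h => mul_nonneg (by positivity)
      (mul_nonneg (scaleWeight_nonneg s h) (diffEnergy_nonneg M δ v h k)))
    (by
      simp only [integral_const_mul]
      exact (summable_integral_scaleWeight_mul_diffEnergy hs hM δ
        (memHs_of_le (by linarith) hmem) (memHs_D1 hmem)).mul_left _)
    (by
      simpa only [F, r, tsum_scaleWeight_mul_norm_twistedDiff_pow_mul_re hsv hDv] using
        ae_abs_scaleWeight_mul_re_trilin_le hs hM hv hS hδ)
  simpa only [F, hint, integral_const_mul, tsum_mul_left, hinner.tsum_eq, abs_mul, abs_of_pos hκ]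
    using hmain

theorem exists_abs_hsInner_mul_D1_self_le (hs : 1 < s) :
    ∃ C, 0 ≤ C ∧ ∀ {v : FC} {S δ : ℝ}, WtSummable (s + 1) v → (∀ x, ‖eval (D1 v) x‖ ≤ S) →
      (∀ x, |(eval v x).im| ≤ S * δ) →
      |hsInner s (mul v (D1 v)) v| ≤ C * S * (hsNorm s v ^ 2 + δ ^ 2 * hsNorm s (D1 v) ^ 2) := by
  obtain ⟨M, hM⟩ := exists_nat_ge (s + 1)
  set κ := ∫ h, scaleWeight s h * ‖diffSymbol h‖ ^ (4 * M)
  set L := ∫ h, scaleWeight s h * diffMajorant M h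
  have hκ : 0 < κ := integral_scaleWeight_mul_norm_diffSymbol_pow_pos hs hM
  have hL : 0 ≤ L :=
    integral_nonneg fun h => mul_nonneg (scaleWeight_nonneg s h) (diffMajorant_nonneg M h)
  refine ⟨64 ^ M * (2 * L) / κ, by positivity, fun {v S δ} hv hS hδ => ?_⟩
  have hS0 : 0 ≤ S := (norm_nonneg _).trans (hS 0)
  have hmem := hv.memHs (by linarith)
  rw [div_mul_eq_mul_div, div_mul_eq_mul_div, le_div_iff₀' hκ]
  calc _ ≤ 64 ^ M * S * ∑' k, ∫ h, scaleWeight s h * diffEnergy M δ v h k :=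
        integral_mul_abs_hsInner_mul_D1_self_le hs hM hv hS hδ
    _ ≤ 64 ^ M * S * (2 * L * (hsNorm s v ^ 2 + δ ^ 2 * hsNorm s (D1 v) ^ 2)) := by
        gcongr
        exact tsum_integral_scaleWeight_mul_diffEnergy_le hs hM δ
          (memHs_of_le (by linarith) hmem) (memHs_D1 hmem)
    _ = _ := by ring

end EnergyEstimate

section Mollifier

open scoped FourierTransform SchwartzMap

variable {ε S : ℝ} {c u : FC} (f : 𝓢(ℝ, ℝ))

lemma hsInner_mult_left (s : ℝ) (m : ℤ → ℝ) (c d : FC) :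
    hsInner s (mult m c) d = hsInner s c (mult m d) := by
  simp only [hsInner, mult, map_mul, Complex.conj_ofReal, mul_left_comm, mul_assoc]

lemma D1_Jmol (jhat : ℝ → ℝ) (ε : ℝ) (c : FC) : D1 (Jmol jhat ε c) = Jmol jhat ε (D1 c) :=
  funext fun _ => mul_left_comm _ _ _

/-- The convolution kernel of the mollifier with symbol `f`, normalised by Mathlib's convention
`f ξ = ∫ y, e^{-2πiyξ} j y`, whence the dilations by `2π ε` below. -/
def mollKernel : 𝓢(ℝ, ℂ) := 𝓕⁻ (SchwartzMap.postcompCLM (𝕜 := ℝ) Complex.ofRealCLM f)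

lemma integral_mollKernel_mul_exp (ξ : ℝ) :
    ∫ y, mollKernel f y * Complex.exp (-2 * π * y * ξ * Complex.I) = f ξ := by
  have hinv : 𝓕 (mollKernel f) = SchwartzMap.postcompCLM (𝕜 := ℝ) Complex.ofRealCLM f :=
    FourierInvPair.fourier_fourierInv_eq _
  have hξ : 𝓕 (mollKernel f) ξ = f ξ := by rw [hinv]; rfl
  rw [← hξ, SchwartzMap.fourier_coe, fourier_eq']
  refine integral_congr_ae (.of_forall fun y => ?_)
  simp only [smul_eq_mul, RCLike.inner_apply, conj_trivial]
  push_cast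
  ring_nf

lemma eval_Jmol (ε : ℝ) (hc : Summable c) (x : ℝ) :
    eval (Jmol f ε c) x = ∫ y, mollKernel f y * eval c (x - 2 * π * ε * y) := by
  set F : ℤ → ℝ → ℂ := fun k y =>
    mollKernel f y * (c k * Complex.exp (Complex.I * k * (x - 2 * π * ε * y : ℝ)))
  have hF (k : ℤ) (y : ℝ) : ‖F k y‖ = ‖c k‖ * ‖mollKernel f y‖ := by
    rw [norm_mul, norm_mul_exp_I_mul, mul_comm]
  have hint (k : ℤ) : Integrable (F k) :=
    ((mollKernel f).integrable.norm.const_mul ‖c k‖).mono'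
      ((mollKernel f).continuous.mul (by fun_prop)).aestronglyMeasurable
      (.of_forall fun y => (hF k y).le)
  have hterm (k : ℤ) : Jmol f ε c k * Complex.exp (Complex.I * k * x) = ∫ y, F k y := by
    rw [Jmol, mult, ← integral_mollKernel_mul_exp, mul_assoc, ← integral_mul_const]
    refine integral_congr_ae (.of_forall fun y => ?_)
    have hphase : Complex.I * k * (x - 2 * π * ε * y : ℝ) =
        -2 * π * y * (ε * k : ℝ) * Complex.I + Complex.I * k * x := by
      push_cast
      ring
    simp only [F, hphase, Complex.exp_add]
    ring
  rw [eval, tsum_congr hterm, integral_tsum_of_summable_integral_norm hint]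
  · simp only [F, eval, tsum_mul_left]
  · simpa only [hF, integral_const_mul] using hc.norm.mul_right _

lemma norm_eval_Jmol_le (ε : ℝ) (hc : Summable c) (hS : ∀ x, ‖eval c x‖ ≤ S) (x : ℝ) :
    ‖eval (Jmol f ε c) x‖ ≤ (∫ y, ‖mollKernel f y‖) * S := by
  rw [eval_Jmol f ε hc, ← integral_mul_const]
  refine norm_integral_le_of_norm_le ((mollKernel f).integrable.norm.mul_const S)
    (.of_forall fun y => ?_)
  rw [norm_mul]
  gcongr
  exact hS _

lemma integrable_mollKernel_mul_eval (ε : ℝ) (hDc : Summable (D1 c)) (x : ℝ) :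
    Integrable fun y => mollKernel f y * eval c (x - 2 * π * ε * y) := by
  have hcont : Continuous (eval c) :=
    continuous_iff_continuousAt.mpr fun x => (hasDerivAt_eval hDc x).continuousAt
  refine (mollKernel f).integrable.mul_bdd (c := ∑' k, ‖c k‖)
    (hcont.comp (by fun_prop)).aestronglyMeasurable
    (.of_forall fun y => norm_eval_le (summable_of_summable_D1 hDc) _)

lemma Jmol_zero (jhat : ℝ → ℝ) (c : FC) : Jmol jhat 0 c = fun k => (jhat 0 : ℂ) * c k :=
  funext fun k => by rw [Jmol, mult, zero_mul]

lemma norm_eval_Jmol_sub_le (ε : ℝ) (hDc : Summable (D1 c)) (hS : ∀ x, ‖eval (D1 c) x‖ ≤ S)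
    (x : ℝ) : ‖eval (Jmol f ε c) x - f 0 * eval c x‖ ≤
      (2 * π * ∫ y, ‖y‖ * ‖mollKernel f y‖) * S * |ε| := by
  have hc := summable_of_summable_D1 hDc
  have hzero : f 0 * eval c x = ∫ y, mollKernel f y * eval c (x - 2 * π * 0 * y) := by
    rw [← eval_Jmol f 0 hc, Jmol_zero, eval_const_mul]
  rw [hzero, eval_Jmol f ε hc, ← integral_sub (integrable_mollKernel_mul_eval f ε hDc x)
    (integrable_mollKernel_mul_eval f 0 hDc x)]
  have hmoment : Integrable fun y : ℝ => ‖y‖ * ‖mollKernel f y‖ := by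
    simpa only [pow_one] using (mollKernel f).integrable_pow_mul volume 1
  calc _ ≤ ∫ y, 2 * π * S * |ε| * (‖y‖ * ‖mollKernel f y‖) := by
        refine norm_integral_le_of_norm_le (hmoment.const_mul _) (.of_forall fun y => ?_)
        rw [← mul_sub, norm_mul]
        calc _ ≤ ‖mollKernel f y‖ * (S * |(x - 2 * π * ε * y) - (x - 2 * π * 0 * y)|) := by
              gcongr
              exact norm_eval_sub_eval_le hDc hS _ _
          _ = _ := by
              have : (x - 2 * π * ε * y) - (x - 2 * π * 0 * y) = -(2 * π * ε * y) := by ring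
              rw [this, abs_neg, abs_mul, abs_mul, abs_of_pos two_pi_pos, norm_eq_abs]
              ring
    _ = _ := by
        rw [integral_const_mul]
        ring

lemma im_eval_eq_zero (hu : isReal u) (x : ℝ) : (eval u x).im = 0 := by
  have hconj : conjFun u = u := funext fun k => by rw [conjFun, hu, Complex.conj_conj]
  rw [← Complex.conj_eq_iff_im, ← eval_conjFun, hconj]

lemma abs_im_eval_Jmol_le (ε : ℝ) (hDu : Summable (D1 u)) (hu : isReal u)
    (hS : ∀ x, ‖eval (D1 u) x‖ ≤ S) (x : ℝ) :
    |(eval (Jmol f ε u) x).im| ≤ (2 * π * ∫ y, ‖y‖ * ‖mollKernel f y‖) * S * |ε| := by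
  have hsub : (eval (Jmol f ε u) x).im = (eval (Jmol f ε u) x - f 0 * eval u x).im := by
    rw [Complex.sub_im, Complex.im_ofReal_mul, im_eval_eq_zero hu, mul_zero, sub_zero]
  rw [hsub]
  exact (Complex.abs_im_le_norm _).trans (norm_eval_Jmol_sub_le f ε hDu hS x)

lemma exists_norm_eval_D1_Jmol_le_and_abs_im_eval_Jmol_le :
    ∃ K, 0 ≤ K ∧ ∀ {ε : ℝ} {u : FC}, 0 < ε → Summable (D1 u) → isReal u →
      (∀ x, ‖eval (D1 (Jmol f ε u)) x‖ ≤ K * linfty (D1 u)) ∧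
        ∀ x, |(eval (Jmol f ε u) x).im| ≤ K * linfty (D1 u) * ε := by
  set K₀ := ∫ y, ‖mollKernel f y‖
  set K₁ := 2 * π * ∫ y, ‖y‖ * ‖mollKernel f y‖
  refine ⟨max K₀ K₁, le_max_of_le_left (integral_nonneg fun y => norm_nonneg _),
    fun {ε u} hε hDu hu => ?_⟩
  have hS : 0 ≤ linfty (D1 u) := Real.iSup_nonneg fun x => norm_nonneg _
  refine ⟨fun x => ?_, fun x => ?_⟩
  · rw [D1_Jmol]
    refine (norm_eval_Jmol_le f ε hDu (norm_eval_le_linfty hDu) x).trans ?_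
    gcongr
    exact le_max_left K₀ K₁
  · refine (abs_im_eval_Jmol_le f ε hDu hu (norm_eval_le_linfty hDu) x).trans ?_
    rw [abs_of_pos hε]
    gcongr
    exact le_max_right K₀ K₁

lemma exists_one_add_sq_pow_mul_abs_le (n : ℕ) : ∃ A, ∀ x, (1 + x ^ 2) ^ n * |f x| ≤ A := by
  refine ⟨_, fun x => le_trans ?_ (SchwartzMap.one_add_le_sup_seminorm_apply (𝕜 := ℝ)
    (m := (2 * n, 0)) le_rfl le_rfl f x)⟩
  rw [norm_iteratedFDeriv_zero, pow_mul, norm_eq_abs, norm_eq_abs]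
  gcongr
  nlinarith [sq_abs x, abs_nonneg x]

lemma wtSummable_Jmol (r : ℝ) (hε : ε ≠ 0) (hc : Summable c) : WtSummable r (Jmol f ε c) := by
  obtain ⟨n, hn⟩ := exists_nat_ge r
  obtain ⟨A, hA⟩ := exists_one_add_sq_pow_mul_abs_le f n
  refine .of_le hn (.of_norm_bounded (hc.norm.mul_left ((1 + (ε ^ 2)⁻¹) ^ n * A)) fun k => ?_)
  have hdilate : 1 + (k : ℝ) ^ 2 ≤ (1 + (ε ^ 2)⁻¹) * (1 + (ε * k) ^ 2) := by
    have : (ε ^ 2)⁻¹ * (ε * k) ^ 2 = (k : ℝ) ^ 2 := by field_simp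
    nlinarith [inv_nonneg.mpr (sq_nonneg ε), sq_nonneg (ε * k)]
  have hbound : wt n k * |f (ε * k)| ≤ (1 + (ε ^ 2)⁻¹) ^ n * A := calc
    _ ≤ ((1 + (ε ^ 2)⁻¹) * (1 + (ε * k) ^ 2)) ^ n * |f (ε * k)| := by
        rw [wt, rpow_natCast]
        gcongr
    _ = (1 + (ε ^ 2)⁻¹) ^ n * ((1 + (ε * k) ^ 2) ^ n * |f (ε * k)|) := by
        rw [mul_pow, mul_assoc]
    _ ≤ _ := by
        gcongr
        exact hA _
  rw [Jmol, mult, norm_mul, norm_mul, Complex.norm_real, Complex.norm_real,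
    norm_of_nonneg (wt_pos k _).le, norm_eq_abs, ← mul_assoc]
  gcongr

lemma exists_hsNorm_Jmol_sq_add_le :
    ∃ A, 0 ≤ A ∧ ∀ {s ε : ℝ} {c : FC}, memHs s c → memHs (s + 1) (Jmol f ε c) →
      hsNorm s (Jmol f ε c) ^ 2 + ε ^ 2 * hsNorm s (D1 (Jmol f ε c)) ^ 2 ≤ A * hsNorm s c ^ 2 := by
  obtain ⟨A, hA⟩ := exists_one_add_sq_pow_mul_abs_le f 1
  refine ⟨A ^ 2, sq_nonneg A, fun {s ε c} hc hJ => ?_⟩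
  have hsum := hasSum_weighted_energy (memHs_of_le (by linarith) hJ) (memHs_D1 hJ) ε
  rw [hsNorm_sq s c, ← tsum_mul_left]
  refine hsum.tsum_eq ▸ hsum.summable.tsum_le_tsum (fun k => ?_) (hc.mul_left _)
  have hsymbol : (1 + (ε * k) ^ 2) * f (ε * k) ^ 2 ≤ A ^ 2 := calc
    _ ≤ ((1 + (ε * k) ^ 2) ^ 1 * |f (ε * k)|) ^ 2 := by
        rw [pow_one, mul_pow _ |f _|, sq_abs]
        gcongr
        exact le_self_pow₀ (le_add_of_nonneg_right (sq_nonneg _)) two_ne_zero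
    _ ≤ A ^ 2 := by
        gcongr
        exact hA _
  have := wt_pos k s
  calc _ = (1 + (ε * k) ^ 2) * f (ε * k) ^ 2 * (wt s k * ‖c k‖ ^ 2) := by
        rw [norm_D1, Jmol, mult, norm_mul, Complex.norm_real, norm_eq_abs, mul_pow,
          mul_pow, mul_pow, sq_abs, sq_abs]
        ring
    _ ≤ _ := by gcongr

end Mollifier

end FC

theorem statement12_general (s : ℝ) (hs : 3 / 2 < s) (jhat : SchwartzMap ℝ ℝ) :
    ∃ C > (0 : ℝ), ∀ ε > (0 : ℝ), ∀ u : FC, FC.memHs s u → FC.isReal u →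
      |FC.hsInner s
          (FC.Jmol (⇑jhat) ε (FC.mul (FC.Jmol (⇑jhat) ε u) (FC.D1 (FC.Jmol (⇑jhat) ε u)))) u|
        ≤ C * FC.linfty (FC.D1 u) * FC.hsNorm s u ^ 2 := by
  obtain ⟨C, hC, henergy⟩ := FC.exists_abs_hsInner_mul_D1_self_le (s := s) (by linarith)
  obtain ⟨K, hK, hsup⟩ := FC.exists_norm_eval_D1_Jmol_le_and_abs_im_eval_Jmol_le jhat
  obtain ⟨A, hA, hJ⟩ := FC.exists_hsNorm_Jmol_sq_add_le jhat
  refine ⟨C * K * A + 1, by positivity, fun ε hε u hu hreal => ?_⟩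
  have hDu := hu.summable_D1 hs
  have hv := FC.wtSummable_Jmol jhat (s + 1) hε.ne' (FC.summable_of_summable_D1 hDu)
  obtain ⟨hDv, him⟩ := hsup hε hDu hreal
  have hS : 0 ≤ FC.linfty (FC.D1 u) := Real.iSup_nonneg fun x => norm_nonneg _
  rw [FC.Jmol, FC.hsInner_mult_left, ← FC.Jmol]
  calc _ ≤ C * (K * FC.linfty (FC.D1 u)) * (A * FC.hsNorm s u ^ 2) := by
        refine (henergy hv hDv him).trans ?_
        gcongr
        exact hJ hu (hv.memHs (by linarith))
    _ = C * K * A * FC.linfty (FC.D1 u) * FC.hsNorm s u ^ 2 := by ring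
    _ ≤ _ := by
        gcongr
        linarith

/-- Let `s > 3/2` and let `j` be a fixed Schwartz mollifier, i.e. `ĵ` is a
Schwartz function with `0 ≤ ĵ ≤ 1` and `ĵ(x) = 1` for `|x| ≤ 1`.  There is `C = C(s) > 0`
such that for all `ε ∈ (0,1)` and `u ∈ H^s(𝕋)`:
`|(J_ε(J_ε u · ∂ₓ J_ε u), u)_{H^s}| ≤ C ‖∂ₓu‖_{L^∞} ‖u‖²_{H^s}`. -/
theorem statement12 (s : ℝ) (hs : 3 / 2 < s) (jhat : SchwartzMap ℝ ℝ)
    (hj0 : ∀ x : ℝ, 0 ≤ jhat x) (hj1 : ∀ x : ℝ, jhat x ≤ 1)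
    (hjone : ∀ x : ℝ, |x| ≤ 1 → jhat x = 1) :
    ∃ C > (0 : ℝ), ∀ ε : ℝ, ε ∈ Set.Ioo (0 : ℝ) 1 → ∀ u : FC,
      FC.memHs s u → FC.isReal u →
      |FC.hsInner s
          (FC.Jmol (⇑jhat) ε (FC.mul (FC.Jmol (⇑jhat) ε u) (FC.D1 (FC.Jmol (⇑jhat) ε u)))) u|
        ≤ C * FC.linfty (FC.D1 u) * FC.hsNorm s u ^ 2 := by
  obtain ⟨C, hC, hbound⟩ := statement12_general s hs jhat
  exact ⟨C, hC, fun ε hε => hbound ε hε.1⟩
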